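/- arXiv:2605.26188 — 12 statements merged into one kernel-verified Lean document; each statement's English description precedes it below -/
import Mathlib

section
/- There exist real numbers α and β such that limsup_{Q→∞} Q · ( min_{x ∈ ℤ, 1 ≤ x < Q} ‖αx‖ · ‖βx‖ ) ≥ 2/(3+√5), where ‖t‖ denotes the distance from the real number t to the nearest integer. -/
/-- The distance from a real number to the nearest integer. -/
noncomputable def distNearestInt (t : ℝ) : ℝ := |t - round t|

theorem lat (n : ℕ) (X Y : ℤ) (h : (Nat.fib n : ℤ) ∣ X * Nat.fib (n-1) + Y) :
    ∀ k, k + 1 ≤ n → ∃ a b e : ℤ, (e = 1 ∨ e = -1) ∧ X = a * Nat.fib k + b * Nat.fib (k+1) ∧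
      Y = e * (a * Nat.fib (n-k) - b * Nat.fib (n-k-1)) := by
  intro k
  induction k with
  | zero =>
    intro hk
    obtain ⟨z, hz⟩ := h
    refine ⟨z, X, 1, Or.inl rfl, by simp, ?_⟩
    simp only [Nat.sub_zero]
    linarith
  | succ k ih =>
    intro hk
    obtain ⟨a, b, e, he, h1, h2⟩ := ih (by omega)
    refine ⟨b - a, a, -e, by omega, ?_, ?_⟩
    · rw [h1, Nat.fib_add_two]; push_cast; ring
    · obtain ⟨r, rfl⟩ : ∃ r, n = r + k + 2 := ⟨n - k - 2, by omega⟩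
      have e1 : r + k + 2 - k = r + 2 := by omega
      have e2 : r + k + 2 - (k+1) = r + 1 := by omega
      rw [h2, e1, e2, Nat.fib_add_two]
      simp only [Nat.add_sub_cancel, show r + 2 - 1 = r + 1 by omega]
      push_cast; ring

theorem fib_prod (n k : ℕ) (h2 : 2 ≤ k) (hk : k + 2 ≤ n) :
    Nat.fib (n-2) ≤ Nat.fib k * Nat.fib (n-k) := by
  obtain ⟨r, rfl⟩ : ∃ r, n = r + k + 2 := ⟨n - k - 2, by omega⟩
  obtain ⟨l, rfl⟩ : ∃ l, k = l + 1 := ⟨k - 1, by omega⟩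
  have e1 : r + (l+1) + 2 - 2 = l + r + 1 := by omega
  have e2 : r + (l+1) + 2 - (l+1) = r + 2 := by omega
  rw [e1, e2, Nat.fib_add, Nat.fib_add_two, mul_add]
  have := Nat.fib_mono (show l ≤ l + 1 by omega)
  gcongr

theorem lat_pos (n : ℕ) (X Y : ℤ) (h : (Nat.fib n : ℤ) ∣ X * Nat.fib (n-1) + Y)
    (hX : 0 < X) (hX2 : X < Nat.fib (n-1)) : (Nat.fib (n-2) : ℤ) ≤ X * |Y| := by
  obtain ⟨x, rfl⟩ : ∃ x : ℕ, X = x := ⟨X.toNat, by omega⟩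
  have hx0 : 0 < x := by exact_mod_cast hX
  have hxn : x < Nat.fib (n-1) := by exact_mod_cast hX2
  set k := Nat.greatestFib x with hkdef
  have hk1 : Nat.fib k ≤ x := Nat.fib_greatestFib_le x
  have hk2 : x < Nat.fib (k+1) := Nat.lt_fib_greatestFib_add_one x
  have hk3 : 2 ≤ k := by
    rw [hkdef, Nat.le_greatestFib]; simpa using Nat.succ_le_of_lt hx0
  have hk4 : k < n - 1 := by
    by_contra hc
    have := Nat.fib_mono (not_lt.mp hc)
    omega
  obtain ⟨a, b, e, he, h1, h2⟩ := lat n x Y h k (by omega)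
  have habs : |Y| = |a * Nat.fib (n-k) - b * Nat.fib (n-k-1)| := by
    rw [h2, abs_mul]; rcases he with rfl | rfl <;> simp
  have hP : (0:ℤ) < Nat.fib k := by exact_mod_cast Nat.fib_pos.2 (by omega)
  have hk2' : (x:ℤ) < Nat.fib (k+1) := by exact_mod_cast hk2
  have hP' : (0:ℤ) < Nat.fib (k+1) := by omega
  have hq : (0:ℤ) ≤ Nat.fib (n-k) := by positivity
  have hq' : (0:ℤ) ≤ Nat.fib (n-k-1) := by positivity
  have hY : (Nat.fib (n-k) : ℤ) ≤ |Y| := by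
    rw [habs]
    rcases lt_trichotomy a 0 with ha | ha | ha
    · have hb : 0 ≤ b := by
        by_contra hb
        push Not at hb
        nlinarith
      rw [le_abs]; right; nlinarith
    · subst ha
      exfalso
      have : 0 < b := by
        by_contra hb
        push Not at hb
        nlinarith
      nlinarith
    · have hb : b ≤ 0 := by
        by_contra hb
        push Not at hb
        nlinarith
      rw [le_abs]; left; nlinarith
  have hh := fib_prod n k hk3 (by omega)
  have hh' : (Nat.fib (n-2) : ℤ) ≤ Nat.fib k * Nat.fib (n-k) := by exact_mod_cast hh
  have hk1' : (Nat.fib k : ℤ) ≤ x := by exact_mod_cast hk1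
  calc _ ≤ _ := hh'
    _ ≤ _ := by gcongr

theorem lat_abs (n : ℕ) (X Y e : ℤ) (he : e = 1 ∨ e = -1)
    (h : (Nat.fib n : ℤ) ∣ X * Nat.fib (n-1) + e * Y)
    (hX : X ≠ 0) (hX2 : |X| < Nat.fib (n-1)) : (Nat.fib (n-2) : ℤ) ≤ |X| * |Y| := by
  have hY : |e * Y| = |Y| := by rw [abs_mul]; rcases he with rfl | rfl <;> simp
  rw [← hY]
  rcases lt_or_gt_of_ne hX with h0 | h0
  · rw [abs_of_neg h0] at hX2 ⊢
    rw [← abs_neg (e * Y)]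
    refine lat_pos n (-X) (-(e*Y)) ?_ (by omega) hX2
    rw [← dvd_neg] at h
    rwa [show -X * (Nat.fib (n-1) : ℤ) + -(e*Y) = -(X * Nat.fib (n-1) + e * Y) by ring]
  · rw [abs_of_pos h0] at hX2 ⊢
    exact lat_pos n X _ h h0 hX2

/-- cassini -/
theorem cass (m : ℕ) : ∃ e : ℤ, (e = 1 ∨ e = -1) ∧
    e = (Nat.fib (m+1) : ℤ)^2 - Nat.fib m * Nat.fib (m+1) - (Nat.fib m : ℤ)^2 := by
  induction m with
  | zero => exact ⟨1, Or.inl rfl, by simp⟩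
  | succ m ih =>
    obtain ⟨e, he, h⟩ := ih
    refine ⟨-e, by omega, ?_⟩
    rw [h, Nat.fib_add_two]; push_cast; ring

theorem latmem (m : ℕ) : ∃ e : ℤ, (e = 1 ∨ e = -1) ∧ ∀ s t : ℤ,
    (Nat.fib (2*m+1) : ℤ) ∣ (s * Nat.fib m + t * Nat.fib (m+1)) * Nat.fib (2*m+1-1)
      + e * (s * Nat.fib (m+1) - t * Nat.fib m) := by
  obtain ⟨e, he, h⟩ := cass m
  refine ⟨e, he, fun s t => ?_⟩
  have h1 : (Nat.fib (2*m+1) : ℤ) = (Nat.fib (m+1) : ℤ)^2 + (Nat.fib m : ℤ)^2 := by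
    rw [Nat.fib_two_mul_add_one]; push_cast; rfl
  have h2 : (Nat.fib (2*m) : ℤ) = Nat.fib m * (2 * Nat.fib (m+1) - Nat.fib m) := by
    rw [Nat.fib_two_mul, Nat.cast_mul, Nat.cast_sub]
    · push_cast; rfl
    · have := Nat.fib_mono (show m ≤ m+1 by omega); omega
  rw [Nat.add_sub_cancel, h1, h2, h]
  refine ⟨s * (Nat.fib (m+1) - Nat.fib m) + t * Nat.fib m, ?_⟩
  ring

/-- d'Ocagne style -/
theorem ocagne (i d : ℕ) : ∃ e : ℤ, (e = 1 ∨ e = -1) ∧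
    (Nat.fib (i+d) : ℤ) * Nat.fib (i+1) - Nat.fib i * Nat.fib (i+d+1) = e * Nat.fib d := by
  induction i with
  | zero => exact ⟨1, Or.inl rfl, by simp⟩
  | succ i ih =>
    obtain ⟨e, he, h⟩ := ih
    refine ⟨-e, by omega, ?_⟩
    rw [neg_mul, ← h, Nat.fib_add_two, show i + 1 + d = i + d + 1 by ring, Nat.fib_add_two]
    push_cast; ring

theorem fibrank_le (p : ℕ) (hp : p.Prime) : ∃ k, 0 < k ∧ k ≤ p + 1 ∧ p ∣ Nat.fib k := by
  have := Fact.mk hp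
  by_contra! hc
  have hc' : ∀ k, 0 < k → k ≤ p + 1 → (Nat.fib k : ZMod p) ≠ 0 := by
    intro k h1 h2 h3
    exact hc k h1 h2 ((ZMod.natCast_eq_zero_iff _ _).1 h3)
  let f : ℕ → ZMod p := fun i => (Nat.fib i : ZMod p) / Nat.fib (i+1)
  have hcard : (Finset.univ.erase (0 : ZMod p)).card < (Finset.Icc 1 p).card := by
    rw [Finset.card_erase_of_mem (Finset.mem_univ _)]
    simp [ZMod.card, hp.pos]
  obtain ⟨i, hi, j, hj, hij, hf⟩ := Finset.exists_ne_map_eq_of_card_lt_of_maps_to hcard (f := f)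
    (by
      intro i hi
      simp only [Finset.coe_Icc, Set.mem_Icc] at hi
      simp only [Finset.coe_erase, Finset.coe_univ, Set.mem_sdiff, Set.mem_univ, true_and, Set.mem_singleton_iff]
      exact div_ne_zero (hc' i (by omega) (by omega)) (hc' _ (by omega) (by omega)))
  simp only [Finset.mem_Icc] at hi hj
  have key : ∀ i j, 1 ≤ i → j ≤ p → i < j → f i = f j → False := by
    intro i j hi hj hij hf
    obtain ⟨d, rfl⟩ : ∃ d, j = i + d := ⟨j - i, by omega⟩
    obtain ⟨e, he, h⟩ := ocagne i d
    have hf' := (div_eq_div_iff (hc' (i+1) (by omega) (by omega)) (hc' (i+d+1) (by omega) (by omega))).1 hf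
    have h' := congrArg (Int.cast : ℤ → ZMod p) h
    push_cast at h'
    rw [hf', sub_self] at h'
    have := hc' d (by omega) (by omega)
    rcases he with rfl | rfl <;> simp_all
  rcases lt_or_gt_of_ne hij with h | h
  · exact key i j hi.1 hj.2 h hf
  · exact key j i hj.1 hi.2 h hf.symm

theorem prime_ge (n p : ℕ) (hn : n.Prime) (hp : p.Prime) (h : p ∣ Nat.fib n) : n ≤ p + 1 := by
  obtain ⟨k, h0, h1, h2⟩ := fibrank_le p hp
  have h3 : p ∣ Nat.fib (Nat.gcd n k) := by rw [Nat.fib_gcd]; exact Nat.dvd_gcd h h2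
  rcases (Nat.dvd_prime hn).1 (Nat.gcd_dvd_left n k) with h4 | h4
  · rw [h4] at h3; simp at h3; exact absurd h3 hp.one_lt.ne'
  · have : n ∣ k := h4 ▸ Nat.gcd_dvd_right n k
    exact (Nat.le_of_dvd h0 this).trans h1

theorem fib_lt (n : ℕ) : Nat.fib (n+3) < 2^(n+2) := by
  induction n with
  | zero => decide
  | succ n ih =>
    have h1 : Nat.fib (n+1+3) = Nat.fib (n+2) + Nat.fib (n+3) := Nat.fib_add_two
    have := Nat.fib_mono (show n+2 ≤ n+3 by omega)
    rw [show n+1+2 = (n+2)+1 by ring, pow_succ]; omega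

theorem exists_coprime (n m : ℕ) (hn : n.Prime) (hnm : n = 2*m+1) (s t : ℤ) :
    ∃ j : ℕ, j < n - 1 ∧ IsCoprime ((s + j) * Nat.fib m + t * Nat.fib (m+1)) (Nat.fib n : ℤ) := by
  by_contra! hc
  have hn3 : 3 ≤ n := by have := hn.two_le; omega
  have H : ∀ j : ℕ, ∃ p : ℕ, j < n - 1 → p.Prime ∧ p ∣ Nat.fib n ∧
      (p:ℤ) ∣ (s + j) * Nat.fib m + t * Nat.fib (m+1) := by
    intro j
    by_cases hj : j < n - 1
    · have := hc j hj
      rw [Int.isCoprime_iff_gcd_eq_one] at this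
      obtain ⟨p, hp, hpd⟩ := Nat.exists_prime_and_dvd this
      refine ⟨p, fun _ => ⟨hp, ?_, ?_⟩⟩
      · have := (Int.natCast_dvd_natCast.2 hpd).trans (Int.gcd_dvd_right _ _)
        exact_mod_cast this
      · exact (Int.natCast_dvd_natCast.2 hpd).trans (Int.gcd_dvd_left _ _)
    · exact ⟨0, fun h => absurd h hj⟩
  choose f hf using H
  have hinj : Set.InjOn f (Finset.range (n-1) : Set ℕ) := by
    intro i hi j hj hij
    simp only [Finset.coe_range, Set.mem_Iio] at hi hj
    obtain ⟨hp, hq, hi'⟩ := hf i hi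
    obtain ⟨-, -, hj'⟩ := hf j hj
    rw [← hij] at hj'
    set p := f i
    have hge := prime_ge n p hn hp hq
    have hd : (p:ℤ) ∣ ((i:ℤ) - j) * Nat.fib m := by
      have := dvd_sub hi' hj'
      rwa [show (s + i) * (Nat.fib m : ℤ) + t * Nat.fib (m+1) - ((s + j) * Nat.fib m + t * Nat.fib (m+1))
        = ((i:ℤ) - j) * Nat.fib m by ring] at this
    rcases (Nat.prime_iff_prime_int.1 hp).dvd_or_dvd hd with h | h
    · have : |(i:ℤ) - j| < p := by rw [abs_lt]; omega
      have := Int.eq_zero_of_abs_lt_dvd h this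
      omega
    · have h : p ∣ Nat.fib m := by exact_mod_cast h
      have h3 : p ∣ Nat.fib (Nat.gcd n m) := by rw [Nat.fib_gcd]; exact Nat.dvd_gcd hq h
      have h4 : Nat.gcd n m = 1 := by
        rw [hnm]; simp
      rw [h4] at h3; simp at h3; exact absurd h3 hp.one_lt.ne'
  have hq0 : Nat.fib n ≠ 0 := (Nat.fib_pos.2 (by omega)).ne'
  have hle : n - 1 ≤ (Nat.fib n).primeFactors.card := by
    have := Finset.card_le_card_of_injOn (s := Finset.range (n-1)) (t := (Nat.fib n).primeFactors) f (by
      intro i hi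
      simp only [Finset.coe_range, Set.mem_Iio] at hi
      simp only [Finset.mem_coe, Nat.mem_primeFactors]
      exact ⟨(hf i hi).1, (hf i hi).2.1, hq0⟩) hinj
    simpa using this
  have h2 : 2 ^ (Nat.fib n).primeFactors.card ≤ Nat.fib n := by
    calc 2 ^ (Nat.fib n).primeFactors.card ≤ ∏ p ∈ (Nat.fib n).primeFactors, p :=
          Finset.pow_card_le_prod _ _ _ (fun p hp => (Nat.prime_of_mem_primeFactors hp).two_le)
      _ ≤ _ := Nat.le_of_dvd (Nat.pos_of_ne_zero hq0) (Nat.prod_primeFactors_dvd _)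
  have h3 := Nat.pow_le_pow_right (n := 2) (by norm_num) hle
  have h4 := fib_lt (n-3)
  rw [show n - 3 + 3 = n by omega, show n - 3 + 2 = n - 1 by omega] at h4
  omega

theorem fib_quad : ∀ m : ℕ, m^2 ≤ 4 * Nat.fib (m+1)
  | 0 => by simp
  | 1 => by simp
  | 2 => by decide
  | 3 => by decide
  | 4 => by decide
  | (m+5) => by
    have h1 := fib_quad (m+4)
    have h2 := fib_quad (m+3)
    have h3 : Nat.fib (m+5+1) = Nat.fib (m+3+1) + Nat.fib (m+4+1) := Nat.fib_add_two
    have h4 : (m+4)^2+(m+3)^2 = (m+5)^2 + (m^2+4*m) := by ring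
    omega

theorem good_pt (n : ℕ) (hn : 5 ≤ n) (a b e : ℤ) (he : e = 1 ∨ e = -1)
    (h : (Nat.fib n : ℤ) ∣ a * Nat.fib (n-1) + e * b) (hc : IsCoprime a (Nat.fib n : ℤ))
    (x : ℕ) (hx : 1 ≤ x) (hxq : x < Nat.fib n) :
    (Nat.fib (n-2) : ℝ) / Nat.fib n ≤ (Nat.fib n : ℝ) *
      (distNearestInt ((a / Nat.fib n : ℝ) * x) * distNearestInt ((b / Nat.fib n : ℝ) * x)) := by
  have hq : (0:ℝ) < Nat.fib n := by exact_mod_cast Nat.fib_pos.2 (by omega)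
  have D : ∀ c : ℤ, ∃ C r : ℤ, C = c * x - Nat.fib n * r ∧
      distNearestInt ((c / Nat.fib n : ℝ) * x) = |(C:ℝ)| / Nat.fib n ∧ 2 * |C| ≤ Nat.fib n := by
    intro c
    set r := round ((c / Nat.fib n : ℝ) * x) with hr
    have h1 : distNearestInt ((c / Nat.fib n : ℝ) * x) = |((c * x - Nat.fib n * r : ℤ):ℝ)| / Nat.fib n := by
      unfold distNearestInt
      rw [← hr, ← abs_of_pos hq, ← abs_div, abs_of_pos hq]
      congr 1
      push_cast; field_simp
    refine ⟨c * x - Nat.fib n * r, r, rfl, h1, ?_⟩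
    have h2 : distNearestInt ((c / Nat.fib n : ℝ) * x) ≤ 1/2 := abs_sub_round _
    rw [h1, div_le_iff₀ hq] at h2
    have h3 : 2 * |((c * x - Nat.fib n * r : ℤ):ℝ)| ≤ Nat.fib n := by linarith
    exact_mod_cast h3
  obtain ⟨X, r, hX, hX1, hX2⟩ := D a
  obtain ⟨Y, r', hY, hY1, -⟩ := D b
  have hX0 : X ≠ 0 := by
    intro h0
    have : (Nat.fib n : ℤ) ∣ a * x := ⟨r, by linarith⟩
    have := hc.symm.dvd_of_dvd_mul_left this
    have := Nat.le_of_dvd hx (by exact_mod_cast this)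
    omega
  have hXlt : |X| < Nat.fib (n-1) := by
    have h1 : Nat.fib n = Nat.fib (n-2) + Nat.fib (n-1) := by
      obtain ⟨r, rfl⟩ : ∃ r, n = r + 2 := ⟨n - 2, by omega⟩
      exact Nat.fib_add_two
    have h2 : Nat.fib (n-2) < Nat.fib (n-1) := by
      obtain ⟨r, rfl⟩ : ∃ r, n = r + 2 := ⟨n - 2, by omega⟩
      exact Nat.fib_lt_fib_succ (by omega)
    omega
  have hdvd : (Nat.fib n : ℤ) ∣ X * Nat.fib (n-1) + e * Y := by
    rw [hX, hY, show (a * x - Nat.fib n * r) * (Nat.fib (n-1):ℤ) + e * (b * x - Nat.fib n * r')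
      = (a * Nat.fib (n-1) + e * b) * x + Nat.fib n * (- r * Nat.fib (n-1) - e * r') by ring]
    exact dvd_add (h.mul_right _) (dvd_mul_right _ _)
  have key := lat_abs n X Y e he hdvd hX0 hXlt
  have key' : (Nat.fib (n-2) : ℝ) ≤ |(X:ℝ)| * |(Y:ℝ)| := by exact_mod_cast key
  rw [hX1, hY1]
  rw [show (Nat.fib n : ℝ) * (|(X:ℝ)| / Nat.fib n * (|(Y:ℝ)| / Nat.fib n)) = |(X:ℝ)| * |(Y:ℝ)| / Nat.fib n by
    field_simp]
  gcongr

theorem ratio_lim : Filter.Tendsto (fun n : ℕ => (Nat.fib n : ℝ) / Nat.fib (n+2)) Filter.atTop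
    (nhds (2 / (3 + Real.sqrt 5))) := by
  have h := tendsto_fib_succ_div_fib_atTop
  have h' := (Filter.tendsto_add_atTop_iff_nat 1).2 h
  have h2 := (h.mul h').inv₀ (by positivity)
  have e : (Real.goldenRatio * Real.goldenRatio)⁻¹ = 2 / (3 + Real.sqrt 5) := by
    have h5 : Real.sqrt 5 * Real.sqrt 5 = 5 := Real.mul_self_sqrt (by norm_num)
    have : Real.goldenRatio * Real.goldenRatio = (3 + Real.sqrt 5) / 2 := by
      unfold Real.goldenRatio; nlinarith
    rw [this, inv_div]
  rw [e] at h2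
  refine h2.congr' ?_
  filter_upwards [Filter.eventually_gt_atTop 0] with n hn
  have h1 : (Nat.fib n : ℝ) ≠ 0 := by exact_mod_cast (Nat.fib_pos.2 hn).ne'
  have h2 : (Nat.fib (n+1) : ℝ) ≠ 0 := by exact_mod_cast (Nat.fib_pos.2 (by omega)).ne'
  have h3 : (Nat.fib (n+1+1) : ℝ) ≠ 0 := by exact_mod_cast (Nat.fib_pos.2 (by omega)).ne'
  change _ = (Nat.fib n : ℝ) / Nat.fib (n+1+1)
  field_simp

theorem dense_pts (u v δ : ℝ) (hδ : 0 < δ) (N : ℕ) : ∃ n : ℕ, N ≤ n ∧ 5 ≤ n ∧ ∃ a b e : ℤ,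
    (e = 1 ∨ e = -1) ∧ (Nat.fib n : ℤ) ∣ a * Nat.fib (n-1) + e * b ∧
    IsCoprime a (Nat.fib n : ℤ) ∧ |(a / Nat.fib n : ℝ) - u| < δ ∧ |(b / Nat.fib n : ℝ) - v| < δ := by
  obtain ⟨M, hM⟩ := exists_nat_gt (16 / δ)
  obtain ⟨n, hnge, hn⟩ := Nat.exists_infinite_primes (N + 2 * M + 6)
  obtain ⟨m, hm⟩ : ∃ m, n = 2 * m + 1 := hn.odd_of_ne_two (by omega)
  obtain ⟨e, he, hl⟩ := latmem m
  set A : ℝ := ((Nat.fib m : ℕ) : ℝ) with hA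
  set B : ℝ := ((Nat.fib (m+1) : ℕ) : ℝ) with hB
  have hq : (Nat.fib n : ℝ) = B^2 + A^2 := by
    rw [hm, Nat.fib_two_mul_add_one]; push_cast; rfl
  obtain ⟨j, hj, hcop⟩ := exists_coprime n m hn hm ⌊u * A + v * B⌋ ⌊u * B - v * A⌋
  set s : ℤ := ⌊u * A + v * B⌋ + j with hs
  set t : ℤ := ⌊u * B - v * A⌋ with ht
  refine ⟨n, by omega, by omega, s * Nat.fib m + t * Nat.fib (m+1),
    s * Nat.fib (m+1) - t * Nat.fib m, e, he, ?_, hcop, ?_⟩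
  · have := hl s t; rw [← hm] at this; exact this
  have hA0 : 0 ≤ A := by positivity
  have hB0 : 0 < B := by rw [hB]; exact_mod_cast Nat.fib_pos.2 (by omega)
  have hAB : A ≤ B := by rw [hA, hB]; exact_mod_cast Nat.fib_mono (by omega)
  have hmR : (16 / δ) < m := hM.trans_le (by exact_mod_cast (show M ≤ m by omega))
  have hm1 : (1:ℝ) ≤ m := by exact_mod_cast (show 1 ≤ m by omega)
  have hquad : (m:ℝ)^2 ≤ 4 * B := by rw [hB]; exact_mod_cast fib_quad m
  have h16 : 16 < m * δ := by rwa [div_lt_iff₀ hδ] at hmR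
  have hbig : (2 * m + 2 : ℝ) < δ * B := by nlinarith
  have hjR : (j:ℝ) ≤ 2 * m := by exact_mod_cast (show j ≤ 2 * m by omega)
  have hj0 : (0:ℝ) ≤ j := by positivity
  have s1 : |(s:ℝ) - (u * A + v * B)| ≤ 2 * m + 1 := by
    have h1 := Int.floor_le (u * A + v * B)
    have h2 := Int.lt_floor_add_one (u * A + v * B)
    rw [hs, abs_le]; push_cast; constructor <;> linarith
  have t1 : |(t:ℝ) - (u * B - v * A)| ≤ 1 := by
    have h1 := Int.floor_le (u * B - v * A)
    have h2 := Int.lt_floor_add_one (u * B - v * A)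
    rw [ht, abs_le]; constructor <;> linarith
  have hqpos : (0:ℝ) < B^2 + A^2 := by positivity
  have fin : (2*m+1) * B + 1 * B < δ * (B^2 + A^2) := by nlinarith [mul_nonneg hδ.le (sq_nonneg A)]
  rw [hq]
  push_cast
  rw [← hA, ← hB]
  constructor
  · rw [div_sub' hqpos.ne', abs_div, abs_of_pos hqpos, div_lt_iff₀ hqpos]
    rw [show s * A + t * B - (B^2+A^2) * u = (s - (u * A + v * B)) * A + (t - (u * B - v * A)) * B by ring]
    calc _ ≤ |(s:ℝ) - (u * A + v * B)| * |A| + |(t:ℝ) - (u * B - v * A)| * |B| := by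
          rw [← abs_mul, ← abs_mul]; exact abs_add_le _ _
      _ ≤ (2*m+1) * B + 1 * B := by
          rw [abs_of_nonneg hA0, abs_of_pos hB0]; gcongr
      _ < _ := fin
  · rw [div_sub' hqpos.ne', abs_div, abs_of_pos hqpos, div_lt_iff₀ hqpos]
    rw [show s * B - t * A - (B^2+A^2) * v = (s - (u * A + v * B)) * B - (t - (u * B - v * A)) * A by ring]
    calc _ ≤ |(s:ℝ) - (u * A + v * B)| * |B| + |(t:ℝ) - (u * B - v * A)| * |A| := by
          rw [← abs_mul, ← abs_mul]; exact abs_sub _ _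
      _ ≤ (2*m+1) * B + 1 * B := by
          rw [abs_of_nonneg hA0, abs_of_pos hB0]; gcongr
      _ < _ := fin

theorem dist_cont : Continuous distNearestInt := by
  have : distNearestInt = fun x : ℝ => ‖(x : UnitAddCircle)‖ := by
    funext x; rw [UnitAddCircle.norm_eq]; rfl
  rw [this]
  exact continuous_norm.comp (AddCircle.continuous_mk' 1)

def goodSet (k : ℕ) : Set (ℝ × ℝ) :=
  ⋃ Q ∈ {Q : ℕ | k ≤ Q ∧ 2 ≤ Q}, ⋂ x ∈ Finset.Ico 1 Q, {p : ℝ × ℝ |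
    2 / (3 + Real.sqrt 5) - 1 / ((k:ℝ) + 1) <
      (Q:ℝ) * (distNearestInt (p.1 * (x:ℕ)) * distNearestInt (p.2 * (x:ℕ)))}

theorem goodSet_open (k : ℕ) : IsOpen (goodSet k) := by
  refine isOpen_biUnion fun Q _ => isOpen_biInter_finset fun x _ => ?_
  refine isOpen_lt continuous_const ?_
  have h1 := dist_cont.comp (continuous_fst.mul continuous_const : Continuous fun p : ℝ × ℝ => p.1 * (x:ℝ))
  have h2 := dist_cont.comp (continuous_snd.mul continuous_const : Continuous fun p : ℝ × ℝ => p.2 * (x:ℝ))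
  exact continuous_const.mul (h1.mul h2)

theorem goodSet_dense (k : ℕ) : Dense (goodSet k) := by
  rw [Metric.dense_iff]
  rintro ⟨u, v⟩ δ hδ
  have hk : 2 / (3 + Real.sqrt 5) - 1 / ((k:ℝ) + 1) < 2 / (3 + Real.sqrt 5) := by
    have : (0:ℝ) < 1 / ((k:ℝ) + 1) := by positivity
    linarith
  obtain ⟨N, hN⟩ := Filter.eventually_atTop.1 (ratio_lim.eventually (lt_mem_nhds hk))
  obtain ⟨n, hn, hn5, a, b, e, he, hd, hc, h1, h2⟩ := dense_pts u v δ hδ (N + k + 2)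
  refine ⟨((a / Nat.fib n : ℝ), (b / Nat.fib n : ℝ)), ?_, ?_⟩
  · rw [Metric.mem_ball, Prod.dist_eq, max_lt_iff, Real.dist_eq, Real.dist_eq]
    exact ⟨h1, h2⟩
  · simp only [goodSet, Set.mem_iUnion, Set.mem_iInter, Set.mem_ofPred_eq, Finset.mem_Ico]
    have := Nat.le_fib_self hn5
    refine ⟨Nat.fib n, ⟨by omega, by omega⟩, fun x hx => ?_⟩
    refine lt_of_lt_of_le ?_ (good_pt n hn5 a b e he hd hc x hx.1 hx.2)
    have := hN (n-2) (by omega)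
    rwa [show n - 2 + 2 = n by omega] at this

theorem bdd_above (α β : ℝ) : ∀ Q : ℕ, 2 ≤ Q →
    (Q:ℝ) * sInf {y : ℝ | ∃ x : ℕ, 1 ≤ x ∧ x < Q ∧
                y = distNearestInt (α * x) * distNearestInt (β * x)} ≤ 1 := by
  intro Q hQ
  obtain ⟨x, hx0, hx1, hx⟩ := Real.exists_nat_abs_mul_sub_round_le α (n := Q - 1) (by omega)
  have hQ0 : (0:ℝ) < Q := by exact_mod_cast (show 0 < Q by omega)
  have hcast : (((Q - 1 : ℕ) : ℝ) + 1) = Q := by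
    rw [Nat.cast_sub (by omega)]; push_cast; ring
  rw [hcast, mul_comm (x:ℝ) α] at hx
  have h1 : distNearestInt (α * x) ≤ 1 / Q := hx
  have h2 : distNearestInt (β * x) ≤ 1 := (abs_sub_round _).trans (by norm_num)
  have h0 : ∀ t, 0 ≤ distNearestInt t := fun t => abs_nonneg _
  have hle : sInf {y : ℝ | ∃ x : ℕ, 1 ≤ x ∧ x < Q ∧
                y = distNearestInt (α * x) * distNearestInt (β * x)} ≤ 1 / Q * 1 := by
    refine le_trans (csInf_le ⟨0, ?_⟩ (show distNearestInt (α * x) * distNearestInt (β * x) ∈ _ from ⟨x, hx0, by omega, rfl⟩)) (mul_le_mul h1 h2 (h0 _) (by positivity))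
    rintro y ⟨x, -, -, rfl⟩
    exact mul_nonneg (h0 _) (h0 _)
  calc _ ≤ (Q:ℝ) * (1 / Q * 1) := by gcongr
    _ = 1 := by field_simp

/-- There exist real numbers α and β such that
`limsup_{Q→∞} Q · (min_{x ∈ ℤ, 1 ≤ x < Q} ‖αx‖·‖βx‖) ≥ 2/(3+√5)`. -/
theorem stmt_0 :
    ∃ α β : ℝ,
      2 / (3 + Real.sqrt 5) ≤
        Filter.limsup
          (fun Q : ℕ =>
            (Q : ℝ) *
              sInf {y : ℝ | ∃ x : ℕ, 1 ≤ x ∧ x < Q ∧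
                y = distNearestInt (α * x) * distNearestInt (β * x)})
          Filter.atTop := by
  obtain ⟨⟨α, β⟩, hp⟩ := (dense_iInter_of_isOpen goodSet_open goodSet_dense).nonempty
  refine ⟨α, β, le_of_forall_lt fun c hc => ?_⟩
  obtain ⟨c', hc1, hc2⟩ := exists_between hc
  refine hc1.trans_le (Filter.le_limsup_of_frequently_le ?_ ?_)
  · rw [Filter.frequently_atTop]
    intro N
    obtain ⟨M, hM⟩ := exists_nat_one_div_lt (sub_pos.2 hc2)
    have hk := Set.mem_iInter.1 hp (N + M)
    simp only [goodSet, Set.mem_iUnion, Set.mem_iInter, Set.mem_ofPred_eq, Finset.mem_Ico] at hk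
    obtain ⟨Q, ⟨hQ1, hQ2⟩, hQ⟩ := hk
    refine ⟨Q, by omega, ?_⟩
    have hQ0 : (0:ℝ) < Q := by exact_mod_cast (show 0 < Q by omega)
    have hle : (1:ℝ) / (((N + M : ℕ):ℝ) + 1) ≤ 1 / ((M:ℝ) + 1) := by
      gcongr; omega
    rw [← div_le_iff₀' hQ0]
    refine le_csInf ⟨_, 1, le_rfl, by omega, rfl⟩ ?_
    rintro y ⟨x, hx1, hx2, rfl⟩
    rw [div_le_iff₀' hQ0]
    have := hQ x ⟨hx1, hx2⟩
    linarith
  · exact ⟨1, Filter.eventually_map.2 (Filter.eventually_atTop.2 ⟨2, bdd_above α β⟩)⟩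
end

section
/- For any real numbers u, v, η with η > 0 such that [u, u+η] ⊆ [0,1] and [v, v+η] ⊆ [0,1], for all sufficiently large n there exists an integer a satisfying: 1 ≤ a < F_n, gcd(a, F_n) = 1, a/F_n ∈ [u, u+η], and the fractional part {F_{n−1}·a / F_n} ∈ [v, v+η]. -/
lemma rec_vanish {ι : Type*} (S : Finset ι) (C z : ι → ℂ)
    (h : ∀ t < S.card, ∑ i ∈ S, C i * z i ^ t = 0) (t : ℕ) :
    ∑ i ∈ S, C i * z i ^ t = 0 := by
  induction t using Nat.strong_induction_on with
  | _ t ih =>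
    rcases lt_or_ge t S.card with ht | ht
    · exact h t ht
    · obtain ⟨d, rfl⟩ := Nat.exists_eq_add_of_le ht
      set P : Polynomial ℂ := ∏ i ∈ S, (Polynomial.X - Polynomial.C (z i)) with hP
      have hmon : P.Monic := Polynomial.monic_prod_X_sub_C _ _
      have hdeg : P.natDegree = S.card := by
        rw [hP]; exact Polynomial.natDegree_finsetProd_X_sub_C_eq_card _ _
      have hroot : ∀ i ∈ S, P.eval (z i) = 0 := by
        intro i hi
        rw [hP, Polynomial.eval_prod]
        exact Finset.prod_eq_zero hi (by simp)
      have key : ∑ j ∈ Finset.range (S.card + 1),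
          P.coeff j * ∑ i ∈ S, C i * z i ^ (j + d) = 0 := by
        have : ∀ j ∈ Finset.range (S.card + 1), P.coeff j * ∑ i ∈ S, C i * z i ^ (j + d)
            = ∑ i ∈ S, C i * z i ^ d * (P.coeff j * z i ^ j) := by
          intro j _
          rw [Finset.mul_sum]
          refine Finset.sum_congr rfl fun i _ => ?_
          rw [pow_add]; ring
        rw [Finset.sum_congr rfl this, Finset.sum_comm]
        refine Finset.sum_eq_zero fun i hi => ?_
        rw [← Finset.mul_sum]
        have h2 := hroot i hi
        rw [Polynomial.eval_eq_sum_range, hdeg] at h2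
        rw [h2, mul_zero]
      rw [Finset.sum_range_succ, Finset.sum_eq_zero, zero_add] at key
      · have hc : P.coeff S.card = 1 := by rw [← hdeg]; exact hmon
        rwa [hc, one_mul] at key
      · intro j hj
        rw [ih (j + d) (by have := Finset.mem_range.1 hj; omega), mul_zero]

lemma jac (m : ℕ) (hm : 0 < m) (b c : ℤ) (hb : IsCoprime b (m : ℤ)) :
    ∃ t : ℕ, t < 2 ^ m.primeFactors.card ∧ IsCoprime (c + t * b) (m : ℤ) := by
  classical
  by_contra! hcon
  let ζ : ℕ → ℂ := fun p => Complex.exp (2 * Real.pi * Complex.I / p)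
  have hζ : ∀ p ∈ m.primeFactors, IsPrimitiveRoot (ζ p) p := fun p hp =>
    Complex.isPrimitiveRoot_exp p (Nat.prime_of_mem_primeFactors hp).ne_zero
  have hζ0 : ∀ p, ζ p ≠ 0 := fun p => Complex.exp_ne_zero _
  have hexp : ∀ t : ℕ, ∏ p ∈ m.primeFactors, (1 + -(ζ p ^ (c + t * b))) =
      ∑ S ∈ m.primeFactors.powerset, (∏ p ∈ S, -(ζ p ^ c)) * (∏ p ∈ S, ζ p ^ b) ^ t := by
    intro t
    rw [Finset.prod_one_add]
    refine Finset.sum_congr rfl fun S _ => ?_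
    rw [← Finset.prod_pow, ← Finset.prod_mul_distrib]
    refine Finset.prod_congr rfl fun p _ => ?_
    rw [zpow_add₀ (hζ0 p), mul_comm (t : ℤ) b, zpow_mul, zpow_natCast]; ring
  have hz : ∀ t : ℕ, t < (m.primeFactors.powerset).card →
      ∑ S ∈ m.primeFactors.powerset, (∏ p ∈ S, -(ζ p ^ c)) * (∏ p ∈ S, ζ p ^ b) ^ t = 0 := by
    intro t ht
    rw [Finset.card_powerset] at ht
    have h1 := hcon t ht
    rw [Int.isCoprime_iff_gcd_eq_one] at h1
    obtain ⟨p, hp, hd⟩ := Nat.exists_prime_and_dvd h1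
    have hd1 : (p : ℤ) ∣ c + t * b := (Int.natCast_dvd_natCast.2 hd).trans (Int.gcd_dvd_left ..)
    have hd2 : (p : ℤ) ∣ m := (Int.natCast_dvd_natCast.2 hd).trans (Int.gcd_dvd_right ..)
    have hpm : p ∈ m.primeFactors :=
      Nat.mem_primeFactors.2 ⟨hp, Int.natCast_dvd_natCast.1 hd2, hm.ne'⟩
    rw [← hexp]
    refine Finset.prod_eq_zero hpm ?_
    rw [((hζ p hpm).zpow_eq_one_iff_dvd _).2 hd1]; ring
  have hall := rec_vanish _ _ _ hz
  obtain ⟨x, y, hxy⟩ := hb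
  have hmz : (0 : ℤ) < m := by exact_mod_cast hm
  obtain ⟨T, hT⟩ := Int.eq_ofNat_of_zero_le (Int.emod_nonneg ((1 - c) * x) hmz.ne')
  have hT2 : (m : ℤ) ∣ c + T * b - 1 := by
    have h3 := Int.emod_add_mul_ediv ((1 - c) * x) m
    rw [hT] at h3
    refine ⟨-(((1 - c) * x) / m) * b - (1 - c) * y, ?_⟩
    linear_combination b * h3 + (1 - c) * hxy
  have h4 := hall T
  rw [← hexp, Finset.prod_eq_zero_iff] at h4
  obtain ⟨p, hp, h5⟩ := h4
  have h6 : ζ p ^ (c + T * b) = 1 := by linear_combination -h5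
  rw [(hζ p hp).zpow_eq_one_iff_dvd] at h6
  have h7 : (p : ℤ) ∣ m := Int.natCast_dvd_natCast.2 (Nat.dvd_of_mem_primeFactors hp)
  have h8 : (p : ℤ) ∣ 1 := by
    have := dvd_sub h6 (h7.trans hT2)
    simpa using this
  have h9 : p ∣ 1 := by exact_mod_cast h8
  exact (Nat.prime_of_mem_primeFactors hp).one_lt.ne' (Nat.dvd_one.1 h9)

lemma omega_bound (m : ℕ) (hm : 0 < m) : 16 ^ m.primeFactors.card ≤ 16 ^ 16 * m := by
  have h1 : ∏ p ∈ m.primeFactors, 16 ≤ ∏ p ∈ m.primeFactors, (p * if p < 16 then 16 else 1) := by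
    refine Finset.prod_le_prod' fun p hp => ?_
    have := (Nat.prime_of_mem_primeFactors hp).pos
    split_ifs <;> omega
  rw [Finset.prod_const, Finset.prod_mul_distrib] at h1
  have h2 : ∏ p ∈ m.primeFactors, p ≤ m := Nat.le_of_dvd hm (Nat.prod_primeFactors_dvd m)
  have h3 : ∏ p ∈ m.primeFactors, (if p < 16 then 16 else 1) ≤ 16 ^ 16 := by
    rw [← Finset.prod_filter, Finset.prod_const]
    refine Nat.pow_le_pow_right (by norm_num) ?_
    calc _ ≤ (Finset.range 16).card := Finset.card_le_card (by
            intro p hp; simpa using (Finset.mem_filter.1 hp).2)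
      _ = 16 := by simp
  calc _ ≤ _ := h1
    _ ≤ m * 16 ^ 16 := Nat.mul_le_mul h2 h3
    _ = _ := mul_comm _ _

lemma docagne (k l : ℕ) : (Nat.fib (k + l) : ℤ) * Nat.fib (k + 1)
    - Nat.fib (k + l + 1) * Nat.fib k = (-1) ^ k * Nat.fib l := by
  induction k with
  | zero => simp
  | succ k ih =>
    rw [show k + 1 + l = k + l + 1 by ring, Nat.fib_add_two (n := k),
      Nat.fib_add_two (n := k + l)]
    push_cast
    rw [pow_succ]
    linear_combination -ih

lemma main_aux (u v η : ℝ) (hη : 0 < η) (hu : 0 ≤ u) (hu1 : u + η ≤ 1) (hv : 0 ≤ v)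
    (hv1 : v + η ≤ 1) (m G p q r w W : ℕ) (s g1 g2 : ℤ) (hs : s * s = 1)
    (hdet : m = p * r + q * w)
    (hm : 0 < m) (hp : (G : ℤ) * p = m * g1 - s * w) (hq : (G : ℤ) * q = m * g2 + s * r)
    (hcop : Nat.Coprime p m) (hpW : p ≤ W) (hqW : q ≤ W) (hrW : r ≤ W) (hwW : w ≤ W)
    (hW : W ^ 2 ≤ 4 * m) (hbig : 256 * 16 ^ 17 < η ^ 4 * m) :
    ∃ a : ℕ, 1 ≤ a ∧ a < m ∧ Nat.gcd a m = 1 ∧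
        (a : ℝ) / (m : ℝ) ∈ Set.Icc u (u + η) ∧
        Int.fract ((G : ℝ) * a / (m : ℝ)) ∈ Set.Icc v (v + η) := by
  set L : ℕ := 2 ^ m.primeFactors.card with hL
  have hL1 : 1 ≤ L := Nat.one_le_two_pow
  have hL4 : L ^ 4 ≤ 16 ^ 16 * m := by
    rw [hL, ← pow_mul, mul_comm, pow_mul]; exact omega_bound m hm
  have hmR : (0 : ℝ) < m := by exact_mod_cast hm
  have hsR : (s : ℝ) * s = 1 := by exact_mod_cast hs
  have hdetR : (m : ℝ) = p * r + q * w := by exact_mod_cast hdet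
  have hsmall : (W : ℝ) * (L + 1) < η / 2 * m := by
    refine lt_of_pow_lt_pow_left₀ 4 (by positivity) ?_
    have e1 : ((W : ℝ)) ^ 2 ≤ 4 * m := by exact_mod_cast hW
    have e2 : (L : ℝ) ^ 4 ≤ 16 ^ 16 * m := by exact_mod_cast hL4
    have e3 : (1 : ℝ) ≤ L := by exact_mod_cast hL1
    calc ((W : ℝ) * (L + 1)) ^ 4 = ((W : ℝ) ^ 2) ^ 2 * ((L : ℝ) + 1) ^ 4 := by ring
      _ ≤ (4 * (m : ℝ)) ^ 2 * (2 * (L : ℝ)) ^ 4 := by gcongr; linarith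
      _ = 256 * (m : ℝ) ^ 2 * (L : ℝ) ^ 4 := by ring
      _ ≤ 256 * (m : ℝ) ^ 2 * (16 ^ 16 * (m : ℝ)) := by gcongr
      _ = (256 * 16 ^ 17) * (m : ℝ) ^ 3 / 16 := by ring
      _ < (η ^ 4 * (m : ℝ)) * (m : ℝ) ^ 3 / 16 := by gcongr
      _ = _ := by ring
  set A : ℝ := (u + η / 2) * m with hA
  set B : ℝ := (v + η / 2) * m with hB
  set X : ℝ := (A * r - s * B * q) / m with hX
  set Y : ℝ := (A * w + s * B * p) / m with hY
  have hXY1 : X * p + Y * q = A := by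
    rw [hX, hY]; field_simp; rw [hdetR]; ring
  have hXY2 : s * (Y * r - X * w) = B := by
    rw [hX, hY]; field_simp
    linear_combination (B * p * r + B * q * w) * hsR - B * hdetR
  obtain ⟨t, ht, hc⟩ := jac m hm p (⌊X⌋ * p + ⌊Y⌋ * q) (Nat.isCoprime_iff_coprime.2 hcop)
  have htR : (t : ℝ) + 1 ≤ L := by exact_mod_cast ht
  have ht0 : (0 : ℝ) ≤ t := by positivity
  set x : ℤ := ⌊X⌋ + t with hx
  set y : ℤ := ⌊Y⌋ with hy
  set z : ℤ := x * p + y * q with hz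
  have hc : IsCoprime z (m : ℤ) := by
    convert hc using 1
    rw [hz, hx]; ring
  have hx1 : |(x : ℝ) - X| ≤ L := by
    have h1 := Int.floor_le X
    have h2 := Int.lt_floor_add_one X
    rw [hx]; push_cast
    rw [abs_le]; constructor <;> linarith
  have hy1 : |(y : ℝ) - Y| ≤ 1 := by
    have h1 := Int.floor_le Y
    have h2 := Int.lt_floor_add_one Y
    rw [abs_le]; constructor <;> linarith
  have hpR : (p : ℝ) ≤ W := by exact_mod_cast hpW
  have hqR : (q : ℝ) ≤ W := by exact_mod_cast hqW
  have hrR : (r : ℝ) ≤ W := by exact_mod_cast hrW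
  have hwR : (w : ℝ) ≤ W := by exact_mod_cast hwW
  have hzA : |(z : ℝ) - A| < η / 2 * m := by
    refine lt_of_le_of_lt ?_ hsmall
    have : (z : ℝ) - A = (x - X) * p + (y - Y) * q := by
      rw [← hXY1, hz]; push_cast; ring
    rw [this]
    calc _ ≤ |(x - X) * (p : ℝ)| + |(y - Y) * (q : ℝ)| := abs_add_le _ _
      _ = |x - X| * p + |y - Y| * q := by
        rw [abs_mul, abs_mul, Nat.abs_cast, Nat.abs_cast]
      _ ≤ L * W + 1 * W := by gcongr
      _ = _ := by ring
  have hsabs : |(s : ℝ)| = 1 := by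
    rcases mul_self_eq_one_iff.1 hsR with h | h <;> rw [h] <;> simp
  set Z : ℤ := s * (y * r - x * w) with hZ
  have hzB : |(Z : ℝ) - B| < η / 2 * m := by
    refine lt_of_le_of_lt ?_ hsmall
    have : (Z : ℝ) - B = s * ((y - Y) * r - (x - X) * w) := by
      rw [← hXY2, hZ]; push_cast; ring
    rw [this, abs_mul, hsabs, one_mul]
    calc _ ≤ |(y - Y) * (r : ℝ)| + |(x - X) * (w : ℝ)| := abs_sub _ _
      _ = |y - Y| * r + |x - X| * w := by
        rw [abs_mul, abs_mul, Nat.abs_cast, Nat.abs_cast]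
      _ ≤ 1 * W + L * W := by gcongr
      _ = _ := by ring
  rw [abs_lt] at hzA hzB
  have z1 : u * m < z := by rw [hA] at hzA; linarith [hzA.1]
  have z2 : z < (u + η) * m := by rw [hA] at hzA; linarith [hzA.2]
  have Z1 : v * m < Z := by rw [hB] at hzB; linarith [hzB.1]
  have Z2 : Z < (v + η) * m := by rw [hB] at hzB; linarith [hzB.2]
  have hzpos : 0 < z := by
    have : (0 : ℝ) < z := lt_of_le_of_lt (by positivity) z1
    exact_mod_cast this
  have hzlt : z < m := by
    have : (z : ℝ) < m := lt_of_lt_of_le z2 (by nlinarith)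
    exact_mod_cast this
  obtain ⟨a, ha⟩ := Int.eq_ofNat_of_zero_le hzpos.le
  have haR : (z : ℝ) = a := by rw [ha]; simp
  rw [ha] at hc hzpos hzlt
  refine ⟨a, by exact_mod_cast hzpos, by exact_mod_cast hzlt, Nat.isCoprime_iff_coprime.1 hc,
    ⟨?_, ?_⟩, ?_⟩
  · rw [le_div_iff₀ hmR, ← haR]; exact z1.le
  · rw [div_le_iff₀ hmR, ← haR]; exact z2.le
  · have hf : Int.fract ((G : ℝ) * a / (m : ℝ)) = Z / m := by
      rw [Int.fract_eq_iff]
      refine ⟨?_, ?_, x * g1 + y * g2, ?_⟩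
      · have : (0 : ℝ) ≤ Z := le_trans (by positivity) Z1.le
        positivity
      · rw [div_lt_one hmR]; exact lt_of_lt_of_le Z2 (by nlinarith)
      · have hpR' : (G : ℝ) * p = m * g1 - s * w := by exact_mod_cast hp
        have hqR' : (G : ℝ) * q = m * g2 + s * r := by exact_mod_cast hq
        rw [← haR, hz, hZ]
        push_cast
        field_simp
        linear_combination x * hpR' + y * hqR'
    rw [hf]
    exact ⟨(le_div_iff₀ hmR).2 Z1.le, (div_le_iff₀ hmR).2 Z2.le⟩

/-- Lemma 1: for any two intervals `[u,u+η], [v,v+η] ⊆ [0,1]` and all `n` large enough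
there is an integer `a` with `1 ≤ a < F_n`, `gcd(a, F_n) = 1`, `a/F_n ∈ [u,u+η]` and
`{F_{n-1} a / F_n} ∈ [v,v+η]`. -/
theorem stmt_1 (u v η : ℝ) (hη : 0 < η)
    (hI : Set.Icc u (u + η) ⊆ Set.Icc (0 : ℝ) 1)
    (hJ : Set.Icc v (v + η) ⊆ Set.Icc (0 : ℝ) 1) :
    ∃ N : ℕ, ∀ n : ℕ, N ≤ n →
      ∃ a : ℕ, 1 ≤ a ∧ a < Nat.fib n ∧ Nat.gcd a (Nat.fib n) = 1 ∧
        (a : ℝ) / (Nat.fib n : ℝ) ∈ Set.Icc u (u + η) ∧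
        Int.fract ((Nat.fib (n - 1) : ℝ) * a / (Nat.fib n : ℝ)) ∈ Set.Icc v (v + η) := by
  have hu := hI (Set.left_mem_Icc.2 (by linarith))
  have hu1 := hI (Set.right_mem_Icc.2 (by linarith))
  have hv := hJ (Set.left_mem_Icc.2 (by linarith))
  have hv1 := hJ (Set.right_mem_Icc.2 (by linarith))
  obtain ⟨N, hN⟩ := exists_nat_gt (256 * 16 ^ 17 / η ^ 4)
  refine ⟨N + 5, fun n hn => ?_⟩
  obtain ⟨k, l, hnkl, hl, hl2⟩ : ∃ k l : ℕ, n = k + 1 + l + 1 ∧ k + 1 ≤ l ∧ l ≤ k + 2 :=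
    ⟨(n - 1) / 2 - 1, n - 1 - (n - 1) / 2, by omega, by omega, by omega⟩
  have hd1 := docagne (k + 1) l
  have hd2 := docagne k (l + 1)
  have hGe : n - 1 = k + 1 + l := by omega
  have hdet := Nat.fib_add (k + 1) l
  have hcop : Nat.Coprime (Nat.fib (k + 1)) (Nat.fib n) := by
    rw [Nat.Coprime, ← Nat.fib_gcd]
    have h1 : Nat.gcd (k + 1) n ∣ 2 := by
      have a1 := Nat.gcd_dvd_left (k + 1) n
      have a2 := Nat.gcd_dvd_right (k + 1) n
      obtain h | h : n = (k + 1) * 2 + 1 ∨ n = (k + 1) * 2 + 2 := by omega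
      · have a3 : Nat.gcd (k + 1) n ∣ (k + 1) * 2 + 1 := a2.trans (dvd_of_eq h)
        have := (Nat.dvd_add_right (a1.mul_right 2)).1 a3
        exact this.trans (by norm_num)
      · have a3 : Nat.gcd (k + 1) n ∣ (k + 1) * 2 + 2 := a2.trans (dvd_of_eq h)
        exact (Nat.dvd_add_right (a1.mul_right 2)).1 a3
    rcases (Nat.dvd_prime Nat.prime_two).1 h1 with h | h <;> rw [h] <;> simp
  have hm : n ≤ Nat.fib n := Nat.le_fib_self (by omega)
  rw [hGe]
  refine main_aux u v η hη hu.1 hu1.2 hv.1 hv1.2 (Nat.fib n) (Nat.fib (k + 1 + l))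
    (Nat.fib (k + 1)) (Nat.fib (k + 2)) (Nat.fib l) (Nat.fib (l + 1)) (Nat.fib (k + 3))
    ((-1) ^ (k + 1)) (Nat.fib k) (Nat.fib (k + 1)) ?_ (by rw [hnkl, hdet]) (by omega)
    ?_ ?_ hcop (Nat.fib_mono (by omega)) (Nat.fib_mono (by omega)) (Nat.fib_mono (by omega))
    (Nat.fib_mono (by omega)) ?_ ?_
  · rw [← mul_pow]; simp
  · rw [show k + (l + 1) = k + 1 + l by ring] at hd2
    rw [hnkl]
    rw [pow_succ]
    linear_combination hd2
  · rw [hnkl]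
    linear_combination hd1
  · have e1 : Nat.fib (k + 3) ≤ 2 * Nat.fib (k + 2) := by
      have := Nat.fib_add_two (n := k + 1)
      have h2 : Nat.fib (k + 1) ≤ Nat.fib (k + 2) := Nat.fib_mono (by omega)
      have h3 : Nat.fib (k + 3) = Nat.fib (k + 1) + Nat.fib (k + 2) := this
      omega
    have e2 : Nat.fib (k + 2) ≤ Nat.fib (l + 1) := Nat.fib_mono (by omega)
    have e3 : Nat.fib n = Nat.fib (k + 1) * Nat.fib l + Nat.fib (k + 2) * Nat.fib (l + 1) := by
      rw [hnkl, hdet]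
    calc _ ≤ (2 * Nat.fib (k + 2)) ^ 2 := Nat.pow_le_pow_left e1 2
      _ = 4 * (Nat.fib (k + 2) * Nat.fib (k + 2)) := by ring
      _ ≤ 4 * (Nat.fib (k + 2) * Nat.fib (l + 1)) := by gcongr
      _ ≤ 4 * Nat.fib n := by rw [e3]; gcongr; omega
  · have h4 : (N : ℝ) ≤ Nat.fib n := by
      have : N ≤ Nat.fib n := by omega
      exact_mod_cast this
    have h5 := lt_of_lt_of_le hN h4
    rw [div_lt_iff₀ (by positivity)] at h5
    linarith
end

section
/- Let n ≥ 3 and let x be a positive integer and y an integer. If y/x ≠ F_{k−1}/F_k for every k with 1 ≤ k ≤ n (that is, y/x is not a convergent of the continued fraction expansion of F_{n−1}/F_n), then |F_{n−1}/F_n − y/x| ≥ 1/(2x²). -/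
theorem conv_aux (m : ℕ) : ∀ j : ℕ, ∃ k : ℕ, 1 ≤ k ∧ k ≤ m + 1 ∧
    Real.convergent ((Nat.fib (m + 2) : ℝ) / (Nat.fib (m + 1) : ℝ)) j =
      (Nat.fib (k + 1) : ℚ) / (Nat.fib k : ℚ) := by
  induction m with
  | zero =>
    intro j
    refine ⟨1, le_rfl, le_rfl, ?_⟩
    have := Real.convergent_of_int (ξ := 1) j
    simpa using this
  | succ m ih =>
    intro j
    rcases Nat.eq_zero_or_pos m with rfl | hm
    · refine ⟨2, by norm_num, le_rfl, ?_⟩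
      have := Real.convergent_of_int (ξ := 2) j
      simpa [Nat.fib_add_two] using this
    · have h1 : (0 : ℝ) < Nat.fib (m + 1) := by exact_mod_cast Nat.fib_pos.2 (by omega)
      have h2 : (0 : ℝ) < Nat.fib (m + 2) := by exact_mod_cast Nat.fib_pos.2 (by omega)
      have h3 : (Nat.fib (m + 1) : ℝ) < Nat.fib (m + 2) := by
        have := Nat.fib_lt_fib_succ (n := m + 1) (by omega)
        exact_mod_cast this
      have hs : (Nat.fib (m + 1 + 2) : ℝ) / (Nat.fib (m + 1 + 1) : ℝ) =
          (Nat.fib (m + 1) : ℝ) / Nat.fib (m + 2) + 1 := by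
        rw [Nat.fib_add_two (n := m + 1)]
        push_cast
        field_simp
      have hf : ⌊(Nat.fib (m + 1) : ℝ) / Nat.fib (m + 2)⌋ = 0 := by
        rw [Int.floor_eq_zero_iff]
        exact ⟨by positivity, (div_lt_one h2).2 h3⟩
      have hfr : Int.fract ((Nat.fib (m + 1) : ℝ) / Nat.fib (m + 2)) =
          (Nat.fib (m + 1) : ℝ) / Nat.fib (m + 2) := by
        rw [Int.fract, hf]; simp
      rw [hs]
      cases j with
      | zero =>
        refine ⟨1, le_rfl, by omega, ?_⟩
        rw [Real.convergent_zero, Int.floor_add_one, hf]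
        simp
      | succ j =>
        obtain ⟨k, hk1, hk2, hk⟩ := ih j
        refine ⟨k + 1, by omega, by omega, ?_⟩
        rw [Real.convergent_succ, Int.floor_add_one, Int.fract_add_one, hf, hfr, inv_div, hk]
        have h5 : (0 : ℚ) < Nat.fib (k + 1) := by exact_mod_cast Nat.fib_pos.2 (by omega)
        rw [Nat.fib_add_two, inv_div]
        push_cast
        field_simp
        ring

/-- If `y/x` is not a convergent `F_{k-1}/F_k` (1 ≤ k ≤ n) of `F_{n-1}/F_n`, then
`|F_{n-1}/F_n − y/x| ≥ 1/(2x²)`. -/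
theorem stmt_2 (n : ℕ) (hn : 3 ≤ n) (x : ℤ) (hx : 0 < x) (y : ℤ)
    (h : ∀ k : ℕ, 1 ≤ k → k ≤ n →
      (y : ℝ) / (x : ℝ) ≠ (Nat.fib (k - 1) : ℝ) / (Nat.fib k : ℝ)) :
    |(Nat.fib (n - 1) : ℝ) / (Nat.fib n : ℝ) - (y : ℝ) / (x : ℝ)| ≥
      1 / (2 * (x : ℝ) ^ 2) := by
  by_contra! hc
  obtain ⟨m, rfl⟩ : ∃ m, n = m + 2 := ⟨n - 2, by omega⟩
  have hq : (((y : ℚ) / (x : ℚ) : ℚ) : ℝ) = (y : ℝ) / (x : ℝ) := by push_cast; rfl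
  have hden : (((y : ℚ) / (x : ℚ) : ℚ).den : ℤ) ≤ x :=
    Int.le_of_dvd hx (by
      have := Rat.den_dvd y x
      rwa [Rat.divInt_eq_div] at this)
  have hden' : ((((y : ℚ) / (x : ℚ) : ℚ).den : ℕ) : ℝ) ≤ (x : ℝ) := by exact_mod_cast hden
  have hdpos : (0 : ℝ) < ((((y : ℚ) / (x : ℚ) : ℚ).den : ℕ) : ℝ) := by
    exact_mod_cast Rat.den_pos _
  have hlt : |(Nat.fib (m + 1) : ℝ) / (Nat.fib (m + 2) : ℝ) - (((y : ℚ) / (x : ℚ) : ℚ) : ℝ)| <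
      1 / (2 * ((((y : ℚ) / (x : ℚ) : ℚ).den : ℕ) : ℝ) ^ 2) := by
    rw [hq]
    refine lt_of_lt_of_le hc ?_
    gcongr
  obtain ⟨j, hj⟩ := Real.exists_rat_eq_convergent hlt
  have h2 : (0 : ℝ) < Nat.fib (m + 2) := by exact_mod_cast Nat.fib_pos.2 (by omega)
  have h3 : (Nat.fib (m + 1) : ℝ) < Nat.fib (m + 2) := by
    have := Nat.fib_lt_fib_succ (n := m + 1) (by omega)
    exact_mod_cast this
  have hf : ⌊(Nat.fib (m + 1) : ℝ) / Nat.fib (m + 2)⌋ = 0 := by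
    rw [Int.floor_eq_zero_iff]
    exact ⟨by positivity, (div_lt_one h2).2 h3⟩
  have hfr : Int.fract ((Nat.fib (m + 1) : ℝ) / Nat.fib (m + 2)) =
      (Nat.fib (m + 1) : ℝ) / Nat.fib (m + 2) := by
    rw [Int.fract, hf]; simp
  cases j with
  | zero =>
    apply h 1 le_rfl (by omega)
    rw [← hq, hj, Real.convergent_zero, hf]
    simp
  | succ j =>
    obtain ⟨k, hk1, hk2, hk⟩ := conv_aux m j
    apply h (k + 1) (by omega) (by omega)
    rw [← hq, hj, Real.convergent_succ, hf, hfr, inv_div, hk]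
    simp
end

section
/- For every ε > 0 there exists N such that for all n ≥ N and all integers k with 2 ≤ k < n, |F_{n−1}/F_n − F_{k−1}/F_k| ≥ 1/( F_k² · ((1+√5)/2 + 1 + ε) ). -/
theorem fib_aux (i j : ℕ) : (Nat.fib (j+i+1) : ℝ) * Nat.fib (j+1) - Nat.fib j * Nat.fib (j+i+2)
    = (-1)^j * Nat.fib (i+1) := by
  induction j with
  | zero => simp
  | succ j ih =>
    have h1 : (Nat.fib (j+1+1) : ℝ) = Nat.fib j + Nat.fib (j+1) := by
      exact_mod_cast Nat.fib_add_two
    have h2 : (Nat.fib (j+1+i+2) : ℝ) = Nat.fib (j+i+1) + Nat.fib (j+i+2) := by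
      rw [show j+1+i+2 = (j+i+1)+2 by ring]; exact_mod_cast Nat.fib_add_two
    rw [h1, h2, show j+1+i+1 = j+i+2 by ring, pow_succ]
    linarith

theorem fib_ratio_le (i : ℕ) : (Nat.fib (i+2) : ℝ) / Nat.fib (i+1) ≤ 2 := by
  have hp : (0:ℝ) < Nat.fib (i+1) := by exact_mod_cast Nat.fib_pos.2 (by omega)
  rw [div_le_iff₀ hp]
  have h1 : (Nat.fib (i+2) : ℝ) = Nat.fib i + Nat.fib (i+1) := by
    exact_mod_cast Nat.fib_add_two
  have h2 : (Nat.fib i : ℝ) ≤ Nat.fib (i+1) := by exact_mod_cast Nat.fib_le_fib_succ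
  linarith

/-- For every ε > 0 and all large `n`, for all `2 ≤ k < n`,
`|F_{n-1}/F_n − F_{k-1}/F_k| ≥ 1/(F_k² ((1+√5)/2 + 1 + ε))`. -/
theorem stmt_4 (ε : ℝ) (hε : 0 < ε) :
    ∃ N : ℕ, ∀ n : ℕ, N ≤ n → ∀ k : ℕ, 2 ≤ k → k < n →
      |(Nat.fib (n - 1) : ℝ) / (Nat.fib n : ℝ) - (Nat.fib (k - 1) : ℝ) / (Nat.fib k : ℝ)| ≥
        1 / ((Nat.fib k : ℝ) ^ 2 * ((1 + Real.sqrt 5) / 2 + 1 + ε)) := by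
  have hev := (tendsto_fib_succ_div_fib_atTop.eventually_le_const
    (show Real.goldenRatio < (1 + Real.sqrt 5) / 2 + ε by
      unfold Real.goldenRatio; linarith))
  obtain ⟨M, hM⟩ := Filter.eventually_atTop.1 hev
  refine ⟨2 * M + 2, fun n hn k hk hkn => ?_⟩
  obtain ⟨j, rfl⟩ : ∃ j, k = j + 1 := ⟨k - 1, by omega⟩
  obtain ⟨i, rfl⟩ : ∃ i, n = j + i + 2 := ⟨n - j - 2, by omega⟩
  have hs : (Nat.fib (j+i+2) : ℝ) = Nat.fib j * Nat.fib (i+1) + Nat.fib (j+1) * Nat.fib (i+2) := by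
    have := Nat.fib_add j (i+1)
    rw [show j + (i+1) + 1 = j+i+2 by ring] at this
    exact_mod_cast this
  have hj2 : (Nat.fib (j+2) : ℝ) = Nat.fib j + Nat.fib (j+1) := by
    exact_mod_cast Nat.fib_add_two
  have key : (Nat.fib (i+2) : ℝ) / Nat.fib (i+1) + Nat.fib (j+2) / Nat.fib (j+1) - 1
      ≤ (1 + Real.sqrt 5) / 2 + 1 + ε := by
    have a := fib_ratio_le i
    have b := fib_ratio_le j
    rcases le_total M (i+1) with h | h
    · have := hM (i+1) h
      simp only [add_assoc, Nat.reduceAdd] at this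
      linarith
    · have := hM (j+1) (by omega)
      simp only [add_assoc, Nat.reduceAdd] at this
      linarith
  have hi : (0:ℝ) < Nat.fib (i+1) := by exact_mod_cast Nat.fib_pos.2 (by omega)
  have hj : (0:ℝ) < Nat.fib (j+1) := by exact_mod_cast Nat.fib_pos.2 (by omega)
  have hn' : (0:ℝ) < Nat.fib (j+i+2) := by exact_mod_cast Nat.fib_pos.2 (by omega)
  have e1 : (Nat.fib (i+2) : ℝ) / Nat.fib (i+1) + Nat.fib (j+2) / Nat.fib (j+1) - 1
      = Nat.fib (j+i+2) / (Nat.fib (i+1) * Nat.fib (j+1)) := by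
    rw [hs, hj2]; field_simp; ring
  rw [e1, div_le_iff₀ (by positivity)] at key
  rw [show j + i + 2 - 1 = j+i+1 by omega, Nat.add_sub_cancel, div_sub_div _ _ hn'.ne' hj.ne',
    show (Nat.fib (j+i+2) : ℝ) * Nat.fib j = Nat.fib j * Nat.fib (j+i+2) by ring,
    fib_aux, abs_div, abs_mul, abs_pow, abs_neg, abs_one, one_pow, one_mul,
    abs_of_pos hi, abs_of_pos (mul_pos hn' hj), ge_iff_le,
    div_le_div_iff₀ (by positivity) (by positivity)]
  nlinarith [mul_le_mul_of_nonneg_right key hj.le]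
end

section
/- For every ε > 0 there exists N such that for all n ≥ N and all integers x with 0 < |x| ≤ F_n/2, ‖x/F_n‖ · ‖F_{n−1}·x/F_n‖ ≥ 1/( F_n · ((3+√5)/2 + ε) ). -/
theorem s5_coord (m : ℕ) : ∀ (p : ℕ) (x k : ℤ), ∃ a b : ℤ,
    x = a * Nat.fib m + b * Nat.fib (m+1) ∧
    ((Nat.fib (m+p) : ℤ) * x - k * Nat.fib (m+p+1) = a * Nat.fib (p+1) - b * Nat.fib p ∨
     (Nat.fib (m+p) : ℤ) * x - k * Nat.fib (m+p+1) = -(a * Nat.fib (p+1) - b * Nat.fib p)) := by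
  induction m with
  | zero =>
    intro p x k
    refine ⟨k, x, by simp, Or.inr ?_⟩
    simp only [zero_add]; ring
  | succ m ih =>
    intro p x k
    obtain ⟨a, b, h1, h2⟩ := ih (p+1) x k
    refine ⟨b - a, a, ?_, ?_⟩
    · rw [h1, Nat.fib_add_two (n := m)]; push_cast; ring
    · have e : m + 1 + p = m + (p+1) := by ring
      rw [e]
      have e2 : (Nat.fib (p+1+1) : ℤ) = Nat.fib p + Nat.fib (p+1) := by
        rw [Nat.fib_add_two (n := p)]; push_cast; ring
      rw [e2] at h2
      rcases h2 with h2 | h2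
      · right; rw [h2]; ring
      · left; rw [h2]; ring

theorem s5_best (A B C D a b : ℤ) (hA : 0 ≤ A) (hB : 0 < B) (hC : 0 ≤ C) (hD : 0 ≤ D)
    (hx0 : a * A + b * B ≠ 0) (hx : |a * A + b * B| < B) : C ≤ |a * C - b * D| := by
  rw [abs_lt] at hx
  obtain ⟨h1, h2⟩ := hx
  rcases lt_trichotomy a 0 with ha | ha | ha
  · have hb : 0 ≤ b := by
      by_contra hb
      push Not at hb
      nlinarith
    rw [le_abs]; right; nlinarith [mul_nonneg hb hD]
  · subst ha
    exfalso
    simp only [zero_mul, zero_add] at *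
    have : b < 1 := by nlinarith
    have : -1 < b := by nlinarith
    have : b = 0 := by omega
    simp [this] at hx0
  · have hb : b ≤ 0 := by
      by_contra hb
      push Not at hb
      nlinarith
    rw [le_abs]; left; nlinarith [mul_nonneg (neg_nonneg.2 hb) hD]

theorem s5_prod (m p : ℕ) : Nat.fib (m+p+1) ≤ Nat.fib (m+2) * Nat.fib (p+1) := by
  rw [Nat.fib_add, Nat.fib_add_two, add_mul]
  have := Nat.mul_le_mul_left (Nat.fib m) (Nat.fib_le_fib_succ (n := p))
  omega

theorem s5_main (n : ℕ) (hn : 0 < n) (x k : ℤ) (hx0 : x ≠ 0) (hx : 2 * |x| ≤ Nat.fib (n+3)) :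
    (Nat.fib (n+1) : ℤ) ≤ |x| * |(Nat.fib (n+2) : ℤ) * x - k * Nat.fib (n+3)| := by
  have habs : |x| = (x.natAbs : ℤ) := Int.abs_eq_natAbs x
  have hg1 := Nat.fib_greatestFib_le x.natAbs
  have hg2 := Nat.lt_fib_greatestFib_add_one x.natAbs
  have hg3 : 2 ≤ Nat.greatestFib x.natAbs := by
    rw [Nat.le_greatestFib]; simp; omega
  have hg4 : Nat.greatestFib x.natAbs < n + 2 := by
    by_contra hc
    push Not at hc
    have h5 := Nat.fib_mono hc
    have h6 : Nat.fib (n+3) = Nat.fib (n+1) + Nat.fib (n+2) := Nat.fib_add_two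
    have h7 : Nat.fib (n+2) = Nat.fib n + Nat.fib (n+1) := Nat.fib_add_two
    have := Nat.fib_pos.2 hn
    omega
  generalize Nat.greatestFib x.natAbs = g at hg1 hg2 hg3 hg4
  obtain ⟨m, rfl⟩ := Nat.exists_eq_add_of_le' hg3
  obtain ⟨p, rfl⟩ : ∃ p, n = m + p := ⟨n - m, by omega⟩
  have e1 : m + p + 2 = (m+2) + p := by ring
  have e2 : m + p + 3 = (m+2) + p + 1 := by ring
  rw [e1, e2]
  obtain ⟨a, b, h1, h2⟩ := s5_coord (m+2) p x k
  have h3 : (Nat.fib (p+1) : ℤ) ≤ |a * Nat.fib (p+1) - b * Nat.fib p| := by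
    apply s5_best (Nat.fib (m+2)) (Nat.fib (m+2+1)) _ _ a b
    · positivity
    · exact_mod_cast Nat.fib_pos.2 (by omega)
    · positivity
    · positivity
    · rw [← h1]; exact hx0
    · rw [← h1]; omega
  have h4 : |(Nat.fib (m+2+p) : ℤ) * x - k * Nat.fib (m+2+p+1)| =
      |a * Nat.fib (p+1) - b * Nat.fib p| := by
    rcases h2 with h | h <;> rw [h]
    rw [abs_neg]
  rw [h4]
  have h5 : (Nat.fib (m+p+1) : ℤ) ≤ Nat.fib (m+2) * Nat.fib (p+1) := by
    exact_mod_cast s5_prod m p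
  have h6 : (Nat.fib (m+2) : ℤ) ≤ |x| := by omega
  calc _ ≤ _ := h5
    _ ≤ _ := by gcongr

theorem s5_ratio (n : ℕ) :
    (Nat.fib (n+2) : ℝ) ≤ (3 + Real.sqrt 5) / 2 * Nat.fib n + 1 := by
  have h := Real.fib_succ_sub_goldenRatio_mul_fib n
  have h1 : Real.goldenConj ^ n ≤ 1 := by
    refine (le_abs_self _).trans ?_
    rw [abs_pow]
    apply pow_le_one₀ (abs_nonneg _)
    rw [abs_le]
    exact ⟨Real.neg_one_lt_goldenConj.le, Real.goldenConj_neg.le.trans zero_le_one⟩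
  rw [Nat.fib_add_two]
  push_cast
  unfold Real.goldenRatio at h
  linarith

theorem stmt_5 (ε : ℝ) (hε : 0 < ε) :
    ∃ N : ℕ, ∀ n : ℕ, N ≤ n → ∀ x : ℤ, x ≠ 0 → (|x| : ℝ) ≤ (Nat.fib n : ℝ) / 2 →
      distNearestInt ((x : ℝ) / (Nat.fib n : ℝ)) *
          distNearestInt ((Nat.fib (n - 1) : ℝ) * (x : ℝ) / (Nat.fib n : ℝ)) ≥
        1 / ((Nat.fib n : ℝ) * ((3 + Real.sqrt 5) / 2 + ε)) := by
  obtain ⟨M, hM⟩ := exists_nat_gt (1/ε)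
  refine ⟨M + 8, fun n hn x hx0 hx => ?_⟩
  obtain ⟨n, rfl⟩ : ∃ k, n = k + 3 := ⟨n - 3, by omega⟩
  simp only [show n + 3 - 1 = n + 2 by omega]
  have hF : (0:ℝ) < Nat.fib (n+3) := by exact_mod_cast Nat.fib_pos.2 (by omega)
  have hxi : 2 * |x| ≤ Nat.fib (n+3) := by
    have : (2:ℝ) * |(x:ℝ)| ≤ Nat.fib (n+3) := by linarith
    exact_mod_cast this
  have hk := s5_main n (by omega) x (round ((Nat.fib (n+2) : ℝ) * x / Nat.fib (n+3))) hx0 hxi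
  have hr := s5_ratio (n+1)
  have hf : (M:ℝ) ≤ Nat.fib (n+1) := by
    have := Nat.le_fib_self (n := n+1) (by omega)
    exact_mod_cast (by omega : M ≤ Nat.fib (n+1))
  have h1 : 1 ≤ ε * Nat.fib (n+1) := by
    rw [div_lt_iff₀ hε] at hM
    nlinarith
  unfold distNearestInt
  generalize round ((Nat.fib (n+2) : ℝ) * x / Nat.fib (n+3)) = k at *
  generalize round ((x : ℝ) / Nat.fib (n+3)) = j
  have hk' : (Nat.fib (n+1) : ℝ) ≤
      |(x:ℝ)| * |(Nat.fib (n+2) : ℝ) * x - k * Nat.fib (n+3)| := by exact_mod_cast hk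
  rw [show n + 1 + 2 = n + 3 by ring] at hr
  generalize (Nat.fib (n+3) : ℝ) = F at *
  have a1 : (x:ℝ) / F - j = (x - j * F) / F := by field_simp
  have a2 : (Nat.fib (n+2) : ℝ) * x / F - k = (Nat.fib (n+2) * x - k * F) / F := by field_simp
  have a3 : |(x:ℝ)| ≤ |(x:ℝ) - j * F| := by
    by_cases hj : j = 0
    · simp [hj]
    · have b1 : (1:ℝ) ≤ |(j:ℝ)| := by exact_mod_cast Int.one_le_abs hj
      have b2 : |(j:ℝ) * F| - |(x:ℝ)| ≤ |(j:ℝ) * F - x| := abs_sub_abs_le_abs_sub _ _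
      rw [abs_sub_comm (x:ℝ), ]
      rw [abs_mul, abs_of_pos hF] at b2
      nlinarith
  rw [a1, a2, abs_div, abs_div, abs_of_pos hF, ge_iff_le, div_mul_div_comm,
    div_le_div_iff₀ (by positivity) (by positivity)]
  have a4 : |(x:ℝ)| * |(Nat.fib (n+2) : ℝ) * x - k * F| ≤
      |(x:ℝ) - j * F| * |(Nat.fib (n+2) : ℝ) * x - k * F| := by gcongr
  have a5 : F ≤ ((3 + Real.sqrt 5) / 2 + ε) * Nat.fib (n+1) := by linarith
  have hc : 0 < (3 + Real.sqrt 5) / 2 + ε := by positivity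
  have a6 := mul_le_mul_of_nonneg_left (hk'.trans a4) hc.le
  have a7 := mul_le_mul_of_nonneg_left (a5.trans a6) hF.le
  linarith
end

section
/- For every ε > 0 there exists N such that for all n ≥ N, min_{x ∈ ℤ, 1 ≤ x < F_n} ‖x/F_n‖ · ‖F_{n−1}·x/F_n‖ ≥ 1/( F_n · ((3+√5)/2 + ε) ). -/
theorem aux_docagne (k j : ℕ) : (Nat.fib (k+1) : ℤ) * Nat.fib (k+j) - Nat.fib k * Nat.fib (k+j+1)
    = (-1)^k * Nat.fib j := by
  induction k with
  | zero => simp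
  | succ k ih =>
    have h1 : (Nat.fib (k+1+1) : ℤ) = Nat.fib k + Nat.fib (k+1) := by
      exact_mod_cast Nat.fib_add_two
    have h2 : (Nat.fib (k+1+j+1) : ℤ) = Nat.fib (k+j) + Nat.fib (k+j+1) := by
      rw [show k+1+j+1 = (k+j)+2 by ring]
      exact_mod_cast Nat.fib_add_two
    rw [h1, h2, show k+1+j = k+j+1 by ring, pow_succ]
    linear_combination -ih

theorem aux_best (k j : ℕ) (a m : ℤ) (ha : 0 < a) (hk : a < Nat.fib (k+2)) :
    (Nat.fib (j+1) : ℤ) ≤ |Nat.fib (k+j+1) * a - Nat.fib (k+j+2) * m| := by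
  have g1 := aux_docagne k 1
  have g2 := aux_docagne k (j+1)
  have g3 := aux_docagne (k+1) j
  rw [show k+1+j = k+j+1 by ring] at g3
  simp only [← add_assoc] at g2
  have hs : ((-1:ℤ)^k)*(-1)^k = 1 := by rw [← mul_pow]; simp
  have habs : |((-1:ℤ)^k)| = 1 := by simp
  rw [pow_succ] at g3
  generalize (-1:ℤ)^k = s at *
  obtain ⟨u, hu⟩ : ∃ u, u = s * (a * Nat.fib (k+1) - m * Nat.fib (k+2)) := ⟨_, rfl⟩
  obtain ⟨v, hv⟩ : ∃ v, v = s * (m * Nat.fib (k+1) - a * Nat.fib k) := ⟨_, rfl⟩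
  simp only [Nat.fib_one, Nat.cast_one, mul_one] at g1
  rw [show k+1+1 = k+2 by ring] at *
  have e1 : a = u * Nat.fib (k+1) + v * Nat.fib (k+2) := by
    rw [hu, hv]; linear_combination (-a) * hs - a * s * g1
  have e2 : m = u * Nat.fib k + v * Nat.fib (k+1) := by
    rw [hu, hv]; linear_combination (-m) * hs - m * s * g1
  have e3 : (Nat.fib (k+j+1) : ℤ) * a - Nat.fib (k+j+2) * m
      = s * (u * Nat.fib (j+1) - v * Nat.fib j) := by
    rw [show k+j+1+1 = k+j+2 by ring] at *
    rw [e1, e2]; linear_combination u * g2 + v * g3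
  rw [e3, abs_mul, habs, one_mul]
  have p1 : (0:ℤ) < Nat.fib (k+1) := by exact_mod_cast Nat.fib_pos.2 (by omega)
  have p2 : (0:ℤ) < Nat.fib (k+2) := by exact_mod_cast Nat.fib_pos.2 (by omega)
  have p3 : (0:ℤ) < Nat.fib (j+1) := by exact_mod_cast Nat.fib_pos.2 (by omega)
  have p4 : (0:ℤ) ≤ Nat.fib j := by positivity
  clear hu hv e2 e3 g1 g2 g3
  rcases lt_trichotomy v 0 with h | h | h
  · have : 1 ≤ u := by by_contra! hc; nlinarith
    exact le_trans (by nlinarith) (le_abs_self _)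
  · subst h
    have : 1 ≤ u := by by_contra! hc; nlinarith
    exact le_trans (by nlinarith) (le_abs_self _)
  · have : u ≤ -1 := by by_contra! hc; nlinarith
    exact le_trans (by nlinarith) (neg_le_abs _)

theorem aux_prod (n : ℕ) (hn : 2 ≤ n) (a m : ℤ) (ha : 0 < a) (hk : a < Nat.fib n) :
    (Nat.fib (n-2) : ℤ) ≤ a * |Nat.fib (n-1) * a - Nat.fib n * m| := by
  lift a to ℕ using ha.le
  norm_cast at ha hk
  have h1 := Nat.fib_greatestFib_le a
  have h2 := Nat.lt_fib_greatestFib_add_one a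
  generalize Nat.greatestFib a = K at *
  have hK2 : 2 ≤ K := by
    by_contra! hc
    interval_cases K <;> simp at h2 <;> omega
  have hKn : K < n := by
    by_contra! hc
    have := Nat.fib_mono hc
    omega
  obtain ⟨k, rfl⟩ := Nat.exists_eq_add_of_le' hK2
  obtain ⟨j, rfl⟩ := Nat.exists_eq_add_of_lt hKn
  have h := aux_best (k+1) j a m (by exact_mod_cast ha)
    (by rw [show k+1+2 = k+2+1 by ring]; exact_mod_cast h2)
  rw [show k+1+j+1 = k+2+j by ring, show k+1+j+2 = k+2+j+1 by ring] at h
  rw [show k+2+j+1-2 = k+j+1 by omega, show k+2+j+1-1 = k+2+j by omega]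
  have h3 : Nat.fib (k+j+1) ≤ Nat.fib (k+2) * Nat.fib (j+1) := by
    rw [Nat.fib_add, Nat.fib_add_two]
    have := Nat.fib_le_fib_succ (n := j)
    nlinarith
  calc (Nat.fib (k+j+1) : ℤ) ≤ Nat.fib (k+2) * Nat.fib (j+1) := by exact_mod_cast h3
    _ ≤ _ := by
      apply mul_le_mul _ h (by positivity) (by positivity)
      exact_mod_cast h1

theorem aux_prod' (n : ℕ) (hn : 2 ≤ n) (a m : ℤ) (ha : a ≠ 0) (hk : |a| < Nat.fib n) :
    (Nat.fib (n-2) : ℤ) ≤ |a| * |Nat.fib (n-1) * a - Nat.fib n * m| := by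
  rcases lt_or_gt_of_ne ha with h | h
  · have := aux_prod n hn (-a) (-m) (by omega) (by rwa [abs_of_neg h] at hk)
    rw [abs_of_neg h, ← abs_neg (_ - _)]
    convert this using 3; ring
  · have := aux_prod n hn a m h (by rwa [abs_of_pos h] at hk)
    rwa [abs_of_pos h]

/-- For every ε > 0 and all large `n`,
`min_{1 ≤ x < F_n} ‖x/F_n‖ · ‖F_{n-1} x / F_n‖ ≥ 1/(F_n ((3+√5)/2 + ε))`. -/
theorem stmt_6 (ε : ℝ) (hε : 0 < ε) :
    ∃ N : ℕ, ∀ n : ℕ, N ≤ n → ∀ x : ℤ, 1 ≤ x → x < (Nat.fib n : ℤ) →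
      distNearestInt ((x : ℝ) / (Nat.fib n : ℝ)) *
          distNearestInt ((Nat.fib (n - 1) : ℝ) * (x : ℝ) / (Nat.fib n : ℝ)) ≥
        1 / ((Nat.fib n : ℝ) * ((3 + Real.sqrt 5) / 2 + ε)) := by
  have hlim : ∃ N : ℕ, ∀ n, N ≤ n → (Nat.fib n : ℝ) ≤
      Nat.fib (n-2) * ((3 + Real.sqrt 5) / 2 + ε) := by
    have t := tendsto_fib_succ_div_fib_atTop
    have t2 := (t.comp (Filter.tendsto_add_atTop_nat 1)).mul t
    have hg : Real.goldenRatio * Real.goldenRatio < (3 + Real.sqrt 5) / 2 + ε := by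
      have := Real.goldenRatio_sq
      rw [← sq, this]; unfold Real.goldenRatio; linarith
    obtain ⟨N, hN⟩ := Filter.eventually_atTop.1 (t2.eventually_lt_const hg)
    refine ⟨N+3, fun n hn => ?_⟩
    obtain ⟨m, rfl⟩ := Nat.exists_eq_add_of_le' (show 2 ≤ n by omega)
    have := hN m (by omega)
    have q1 : (0:ℝ) < Nat.fib (m+1) := by exact_mod_cast Nat.fib_pos.2 (by omega)
    have q2 : (0:ℝ) < Nat.fib m := by exact_mod_cast Nat.fib_pos.2 (by omega)
    simp only [Function.comp] at this
    rw [div_mul_div_cancel₀ q1.ne', div_lt_iff₀ q2] at this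
    rw [show m+2-2 = m by omega, mul_comm]
    exact this.le
  obtain ⟨N, hN⟩ := hlim
  refine ⟨N+2, fun n hn x hx1 hx2 => ?_⟩
  have hl := hN n (by omega)
  have hF : (0:ℝ) < Nat.fib n := by exact_mod_cast Nat.fib_pos.2 (by omega)
  have hC : (0:ℝ) < (3 + Real.sqrt 5) / 2 + ε := by positivity
  unfold distNearestInt
  have hr := abs_sub_round ((x : ℝ) / Nat.fib n)
  generalize round ((x : ℝ) / Nat.fib n) = r at *
  generalize round ((Nat.fib (n - 1) : ℝ) * (x : ℝ) / (Nat.fib n : ℝ)) = m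
  have e1 : (x : ℝ) / Nat.fib n - r = ((x - Nat.fib n * r : ℤ) : ℝ) / Nat.fib n := by
    push_cast; field_simp
  have e2 : (Nat.fib (n - 1) : ℝ) * (x : ℝ) / (Nat.fib n : ℝ) - m
      = ((Nat.fib (n-1) * (x - Nat.fib n * r) - Nat.fib n * (m - Nat.fib (n-1) * r) : ℤ) : ℝ)
        / Nat.fib n := by
    push_cast; field_simp; ring
  rw [e1, abs_div, abs_of_pos hF, div_le_iff₀ hF] at hr
  have hy : |x - Nat.fib n * r| < Nat.fib n := by
    have : ((|x - Nat.fib n * r| : ℤ) : ℝ) < Nat.fib n := by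
      rw [Int.cast_abs]; linarith
    exact_mod_cast this
  have hy0 : x - Nat.fib n * r ≠ 0 := by
    intro h
    have hd : (Nat.fib n : ℤ) ∣ x := ⟨r, by linarith⟩
    have := Int.le_of_dvd (by omega) hd
    omega
  have key := aux_prod' n (by omega) _ (m - Nat.fib (n-1) * r) hy0 hy
  rw [e1, e2, abs_div, abs_div, abs_of_pos hF, div_mul_div_comm, ← Int.cast_abs, ← Int.cast_abs,
    ← Int.cast_mul, ge_iff_le, div_le_div_iff₀ (by positivity) (by positivity)]
  have key' : (Nat.fib (n-2) : ℝ) ≤ ((|x - Nat.fib n * r| * |Nat.fib (n-1) * (x - Nat.fib n * r) - Nat.fib n * (m - Nat.fib (n-1) * r)| : ℤ) : ℝ) := by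
    exact_mod_cast key
  generalize ((|x - Nat.fib n * r| * |Nat.fib (n-1) * (x - Nat.fib n * r) - Nat.fib n * (m - Nat.fib (n-1) * r)| : ℤ) : ℝ) = P at *
  have h4 := mul_le_mul_of_nonneg_right key' hC.le
  have h5 := mul_le_mul_of_nonneg_right (hl.trans h4) hF.le
  linarith
end

section
/- For every ε > 0 there exists N such that for all n ≥ N and every integer a coprime to F_n, min_{x ∈ ℤ, 1 ≤ x < F_n} ‖a·x/F_n‖ · ‖F_{n−1}·a·x/F_n‖ ≥ 1/( F_n · ((3+√5)/2 + ε) ). -/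
theorem aux_ab (u w : ℤ) (n : ℕ) : ∀ k j : ℕ, k + j + 2 = n → ∃ a b s : ℤ, (s = 1 ∨ s = -1) ∧
    u = a * Nat.fib (k+1) + b * Nat.fib (k+2) ∧
    s * (Nat.fib (n-1) * u - w * Nat.fib n) = a * Nat.fib (j+1) - b * Nat.fib j := by
  intro k
  induction k with
  | zero =>
    intro j hj
    refine ⟨u - w, w, 1, Or.inl rfl, by simp, ?_⟩
    subst hj
    have h1 : 0 + j + 2 - 1 = j + 1 := by omega
    have h2 : 0 + j + 2 = j + 2 := by omega
    rw [h1, h2, Nat.fib_add_two]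
    push_cast
    ring
  | succ k ih =>
    intro j hj
    obtain ⟨a, b, s, hs, h1, h2⟩ := ih (j+1) (by omega)
    refine ⟨b - a, a, -s, by omega, ?_, ?_⟩
    · rw [h1, show k + 1 + 2 = (k + 1) + 2 from rfl, Nat.fib_add_two (n := k+1)]
      push_cast
      ring
    · rw [neg_mul, h2, Nat.fib_add_two (n := j)]
      push_cast
      ring

theorem aux_fib (k j : ℕ) : Nat.fib (k + j) ≤ Nat.fib (k+1) * Nat.fib (j+1) := by
  rcases k with _ | k
  · rw [Nat.zero_add, Nat.zero_add, Nat.fib_one, one_mul]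
    exact Nat.fib_le_fib_succ
  · rw [show k + 1 + j = k + j + 1 by ring, Nat.fib_add, Nat.fib_add_two, add_mul]
    gcongr
    exact Nat.le_succ j

theorem aux_pos (n : ℕ) (u w : ℤ) (hu : 1 ≤ u) (hun : u < Nat.fib n) :
    (Nat.fib (n-2) : ℤ) ≤ u * |Nat.fib (n-1) * u - w * Nat.fib n| := by
  obtain ⟨m, rfl⟩ : ∃ m : ℕ, u = m := ⟨u.toNat, by omega⟩
  have hm1 : Nat.fib m.greatestFib ≤ m := Nat.fib_greatestFib_le m
  have hm2 : m < Nat.fib (m.greatestFib + 1) := Nat.lt_fib_greatestFib_add_one m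
  generalize m.greatestFib = K at hm1 hm2
  rcases K with _ | k
  · simp at hm2; omega
  have hK : k + 1 < n := by
    by_contra! h
    have := Nat.fib_mono h
    omega
  obtain ⟨j, hj⟩ : ∃ j, k + j + 2 = n := ⟨n - 2 - k, by omega⟩
  obtain ⟨a, b, s, hs, h1, h2⟩ := aux_ab m w n k j hj
  have habs : |(Nat.fib (n-1) : ℤ) * m - w * Nat.fib n| = |a * (Nat.fib (j+1) : ℤ) - b * Nat.fib j| := by
    rw [← h2, abs_mul]
    rcases hs with rfl | rfl <;> simp
  have hF1 : (0:ℤ) < Nat.fib (k+1) := by exact_mod_cast Nat.fib_pos.2 (by omega)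
  have hF2 : (0:ℤ) < Nat.fib (k+2) := by exact_mod_cast Nat.fib_pos.2 (by omega)
  have hJ1 : (0:ℤ) < Nat.fib (j+1) := by exact_mod_cast Nat.fib_pos.2 (by omega)
  have hJ0 : (0:ℤ) ≤ Nat.fib j := by positivity
  have hm2' : (m:ℤ) < Nat.fib (k+2) := by exact_mod_cast hm2
  have key : (Nat.fib (j+1) : ℤ) ≤ |a * (Nat.fib (j+1) : ℤ) - b * Nat.fib j| := by
    rcases lt_trichotomy b 0 with hb | hb | hb
    · have ha : 1 ≤ a := by
        by_contra! h
        nlinarith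
      refine le_trans ?_ (le_abs_self _)
      nlinarith
    · subst hb
      have ha : 1 ≤ a := by
        by_contra! h
        nlinarith
      refine le_trans ?_ (le_abs_self _)
      nlinarith
    · have ha : a ≤ -1 := by
        by_contra! h
        nlinarith
      refine le_trans ?_ (neg_le_abs _)
      nlinarith
  rw [habs]
  have h3 := aux_fib k j
  rw [show n - 2 = k + j by omega]
  calc (Nat.fib (k+j) : ℤ) ≤ Nat.fib (k+1) * Nat.fib (j+1) := by exact_mod_cast h3
    _ ≤ _ := by
      apply mul_le_mul _ key hJ1.le (by positivity)
      exact_mod_cast hm1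

theorem aux_all (n : ℕ) (u w : ℤ) (hu : u ≠ 0) (hun : |u| < Nat.fib n) :
    (Nat.fib (n-2) : ℤ) ≤ |u| * |Nat.fib (n-1) * u - w * Nat.fib n| := by
  rcases lt_or_gt_of_ne hu with h | h
  · rw [abs_of_neg h] at hun ⊢
    have := aux_pos n (-u) (-w) (by omega) hun
    rw [← abs_neg (_ - _)]
    convert this using 3
    ring
  · rw [abs_of_pos h] at hun ⊢
    exact aux_pos n u w (by omega) hun

theorem aux_lim (ε : ℝ) (hε : 0 < ε) : ∃ N : ℕ, ∀ n : ℕ, N ≤ n →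
    (Nat.fib n : ℝ) ≤ Nat.fib (n-2) * ((3 + Real.sqrt 5) / 2 + ε) := by
  obtain ⟨M, hM⟩ := exists_nat_ge (1 / ε)
  refine ⟨M + 7, fun n hn => ?_⟩
  obtain ⟨m, rfl⟩ : ∃ m, n = m + 2 := ⟨n - 2, by omega⟩
  have h1 := Real.fib_succ_sub_goldenRatio_mul_fib m
  have h2 : Real.goldenConj ^ m ≤ 1 := by
    refine le_trans (le_abs_self _) ?_
    rw [abs_pow]
    apply pow_le_one₀ (abs_nonneg _)
    rw [abs_le]
    exact ⟨Real.neg_one_lt_goldenConj.le, by linarith [Real.goldenConj_neg]⟩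
  have h3 : m ≤ Nat.fib m := Nat.le_fib_self (by omega)
  have h4 : (M:ℝ) ≤ Nat.fib m := by exact_mod_cast (by omega : M ≤ Nat.fib m)
  have h5 : 1 ≤ ε * Nat.fib m := by
    have := (div_le_iff₀ hε).1 (hM.trans h4)
    linarith
  rw [show m + 2 - 2 = m by omega, Nat.fib_add_two]
  push_cast
  have h6 : Real.goldenRatio = (1 + Real.sqrt 5) / 2 := rfl
  rw [h6] at h1
  nlinarith

theorem stmt_7 (ε : ℝ) (hε : 0 < ε) :
    ∃ N : ℕ, ∀ n : ℕ, N ≤ n → ∀ a : ℤ, Int.gcd a (Nat.fib n) = 1 →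
      ∀ x : ℤ, 1 ≤ x → x < (Nat.fib n : ℤ) →
        distNearestInt ((a : ℝ) * (x : ℝ) / (Nat.fib n : ℝ)) *
            distNearestInt ((Nat.fib (n - 1) : ℝ) * (a : ℝ) * (x : ℝ) / (Nat.fib n : ℝ)) ≥
          1 / ((Nat.fib n : ℝ) * ((3 + Real.sqrt 5) / 2 + ε)) := by
  obtain ⟨N, hN⟩ := aux_lim ε hε
  refine ⟨N, fun n hn a ha x hx1 hx2 => ?_⟩
  have hlim := hN n hn
  have hF : (0:ℝ) < Nat.fib n := by exact_mod_cast (by omega : (0:ℤ) < Nat.fib n)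
  unfold distNearestInt
  set r := round ((a : ℝ) * (x : ℝ) / (Nat.fib n : ℝ)) with hr
  set q := round ((Nat.fib (n - 1) : ℝ) * (a : ℝ) * (x : ℝ) / (Nat.fib n : ℝ)) with hq
  have e1 : (a : ℝ) * x / Nat.fib n - r = ((a * x - r * Nat.fib n : ℤ) : ℝ) / Nat.fib n := by
    push_cast; field_simp
  have hne : a * x - r * Nat.fib n ≠ 0 := by
    intro h
    have hd : (Nat.fib n : ℤ) ∣ a * x := ⟨r, by linarith⟩
    have hd' : (Nat.fib n : ℤ) ∣ x :=
      IsCoprime.dvd_of_dvd_mul_left (Int.isCoprime_iff_gcd_eq_one.2 ha).symm hd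
    have := Int.le_of_dvd (by omega) hd'
    omega
  have hlt : |a * x - r * Nat.fib n| < Nat.fib n := by
    have h := abs_sub_round ((a : ℝ) * (x : ℝ) / (Nat.fib n : ℝ))
    rw [← hr, e1, abs_div, abs_of_pos hF, div_le_iff₀ hF] at h
    have : |((a * x - r * Nat.fib n : ℤ) : ℝ)| < Nat.fib n := by linarith
    exact_mod_cast this
  have key := aux_all n (a * x - r * Nat.fib n) (q - Nat.fib (n-1) * r) hne hlt
  have e2 : (Nat.fib (n-1) : ℝ) * a * x / Nat.fib n - q =
      ((Nat.fib (n-1) * (a * x - r * Nat.fib n) - (q - Nat.fib (n-1) * r) * Nat.fib n : ℤ) : ℝ)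
        / Nat.fib n := by
    push_cast; field_simp; ring
  rw [e1, e2, abs_div, abs_div, abs_of_pos hF, div_mul_div_comm, ← Int.cast_abs, ← Int.cast_abs,
    ← Int.cast_mul, ge_iff_le]
  have key' := (Int.cast_le (R := ℝ)).2 key
  have hC : 0 < (3 + Real.sqrt 5) / 2 + ε := by positivity
  rw [div_le_div_iff₀ (by positivity) (by positivity)]
  rw [Int.cast_natCast] at key'
  calc 1 * ((Nat.fib n : ℝ) * Nat.fib n) ≤ (Nat.fib (n-2) * ((3 + Real.sqrt 5) / 2 + ε)) * Nat.fib n := by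
        rw [one_mul]; gcongr
    _ = Nat.fib (n-2) * (Nat.fib n * ((3 + Real.sqrt 5) / 2 + ε)) := by ring
    _ ≤ _ := by gcongr
end

section
/- Let (δ_ν)_{ν≥1} be any sequence of positive real numbers tending to 0. Then there exist real numbers α, β ∈ [0,1], a strictly increasing sequence of positive integers (n_ν), and integers (a_ν) with 1 ≤ a_ν < F_{n_ν} and gcd(a_ν, F_{n_ν}) = 1, such that for every ν: |α − a_ν/F_{n_ν}| ≤ δ_ν/F_{n_ν}² and |β − {F_{n_ν−1}·a_ν/F_{n_ν}}| ≤ δ_ν/F_{n_ν}². -/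
lemma aux_fib_det (i d : ℕ) :
    (Nat.fib (i + d) : ℤ) * Nat.fib (i + 1) - Nat.fib i * Nat.fib (i + d + 1)
      = (-1) ^ i * Nat.fib d := by
  induction i with
  | zero => simp
  | succ i ih =>
    have h1 : (Nat.fib (i + 1 + 1) : ℤ) = Nat.fib i + Nat.fib (i + 1) := by
      exact_mod_cast Nat.fib_add_two
    have h2 : (Nat.fib (i + 1 + d + 1) : ℤ) = Nat.fib (i + d) + Nat.fib (i + d + 1) := by
      have : i + 1 + d + 1 = i + d + 2 := by ring
      rw [this]
      exact_mod_cast Nat.fib_add_two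
    have h3 : i + 1 + d = i + d + 1 := by ring
    rw [h1, h2, h3, pow_succ]
    linarith

lemma aux_rank (p : ℕ) (hp : p.Prime) : ∃ k, 1 ≤ k ∧ k ≤ p + 1 ∧ p ∣ Nat.fib k := by
  have := Fact.mk hp
  by_contra hcon
  push Not at hcon
  -- ratios F_{i}/F_{i+1} for i in 0..p, with F_{i+1} nonzero for i ≤ p
  have hnz : ∀ i, i ≤ p → (Nat.fib (i + 1) : ZMod p) ≠ 0 := by
    intro i hi h
    rw [ZMod.natCast_eq_zero_iff] at h
    exact hcon (i + 1) (by omega) (by omega) h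
  have key : ∀ i d, 1 ≤ d → i + d ≤ p →
      (Nat.fib i : ZMod p) / Nat.fib (i + 1) ≠ (Nat.fib (i + d) : ZMod p) / Nat.fib (i + d + 1) := by
    intro i d hd hid h
    rw [div_eq_div_iff (hnz _ (by omega)) (hnz _ (by omega))] at h
    have h2 := congrArg (Int.cast : ℤ → ZMod p) (aux_fib_det i d)
    push_cast at h2
    rw [← h, sub_self] at h2
    have h3 : (Nat.fib d : ZMod p) = 0 := by
      rcases mul_eq_zero.mp h2.symm with h | h
      · exact absurd h (pow_ne_zero _ (by simp))
      · exact h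
    rw [ZMod.natCast_eq_zero_iff] at h3
    exact hcon d hd (by omega) h3
  let f : Fin (p + 1) → ZMod p := fun i => (Nat.fib i : ZMod p) / Nat.fib (i + 1)
  have hf : Function.Injective f := by
    intro i j hij
    by_contra hne
    rcases lt_or_gt_of_ne hne with h | h
    · have := key i (j - i) (by omega) (by omega)
      rw [show (i : ℕ) + (j - i) = j by omega] at this
      exact this hij
    · have := key j (i - j) (by omega) (by omega)
      rw [show (j : ℕ) + (i - j) = i by omega] at this
      exact this hij.symm
  have := Fintype.card_le_of_injective f hf
  simp [ZMod.card] at this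

lemma aux_prime_ge (p q : ℕ) (hp : p.Prime) (hq : q.Prime) (h : p ∣ Nat.fib q) : q - 1 ≤ p := by
  obtain ⟨k, hk1, hk2, hk⟩ := aux_rank p hp
  by_contra hlt
  have hc : Nat.Coprime k q := by
    apply Nat.Coprime.symm
    rw [Nat.Prime.coprime_iff_not_dvd hq]
    intro hd
    have := Nat.le_of_dvd (by omega) hd
    omega
  have : p ∣ Nat.gcd (Nat.fib k) (Nat.fib q) := Nat.dvd_gcd hk h
  rw [← Nat.fib_gcd, hc] at this
  simp at this
  exact hp.one_lt.ne' this

lemma aux_fib_le (n : ℕ) : Nat.fib (n + 1) ≤ 2 ^ n := by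
  induction n with
  | zero => simp
  | succ n ih =>
    rw [Nat.fib_add_two, pow_succ]
    have := Nat.fib_mono (Nat.le_succ n)
    simp only [Nat.succ_eq_add_one] at this
    omega

lemma aux_sieve (q b d : ℕ) (hq : q.Prime) (hq5 : 5 ≤ q) (hd : Nat.Coprime d (Nat.fib q)) :
    ∃ t, t < q - 1 ∧ Nat.Coprime (b + t * d) (Nat.fib q) := by
  by_contra hcon
  push Not at hcon
  have h1 : ∀ t, ∃ p, t < q - 1 → p.Prime ∧ p ∣ b + t * d ∧ p ∣ Nat.fib q := by
    intro t
    by_cases ht : t < q - 1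
    · obtain ⟨p, hp, h⟩ := Nat.Prime.not_coprime_iff_dvd.mp (hcon t ht)
      exact ⟨p, fun _ => ⟨hp, h⟩⟩
    · exact ⟨0, fun h => absurd h ht⟩
  choose f hf using h1
  have hF : Nat.fib q ≠ 0 := (Nat.fib_pos.mpr (by omega)).ne'
  have main : ∀ t t', t < t' → t' < q - 1 → f t ≠ f t' := by
    intro t t' htt ht' h
    obtain ⟨hp, h1, h2⟩ := hf t (by omega)
    obtain ⟨-, h3, -⟩ := hf t' ht'
    rw [← h] at h3
    have h4 : f t ∣ (t' - t) * d := by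
      have := (Nat.dvd_sub h3 h1)
      rwa [Nat.add_sub_add_left, ← Nat.sub_mul] at this
    rcases (Nat.Prime.dvd_mul hp).mp h4 with h5 | h5
    · have := Nat.le_of_dvd (by omega) h5
      have := aux_prime_ge _ q hp hq h2
      omega
    · have := Nat.dvd_gcd h5 h2
      rw [hd] at this
      exact hp.one_lt.ne' (by simpa using this)
  have hcard : q - 1 ≤ (Nat.fib q).primeFactors.card := by
    have := Finset.card_le_card_of_injOn (s := Finset.range (q - 1))
      (t := (Nat.fib q).primeFactors) f
      (by
        intro t ht
        have ht := hf t (by simpa using ht)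
        simp [ht.1, ht.2.2, hF])
      (by
        intro t ht t' ht' h
        simp at ht ht'
        by_contra hne
        rcases lt_or_gt_of_ne hne with h' | h'
        · exact main t t' h' ht' h
        · exact main t' t h' ht h.symm)
    simpa using this
  have h2 : 4 ^ (Nat.fib q).primeFactors.card ≤ ∏ p ∈ (Nat.fib q).primeFactors, p := by
    apply Finset.pow_card_le_prod
    intro p hp
    have := aux_prime_ge p q (Nat.prime_of_mem_primeFactors hp) hq (Nat.dvd_of_mem_primeFactors hp)
    omega
  have h3 := Nat.le_of_dvd (Nat.pos_of_ne_zero hF) (Nat.prod_primeFactors_dvd (Nat.fib q))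
  have h4 := aux_fib_le (q - 1)
  rw [Nat.sub_add_cancel (by omega)] at h4
  have h5 : 4 ^ (q - 1) ≤ 4 ^ (Nat.fib q).primeFactors.card := Nat.pow_le_pow_right (by norm_num) hcard
  have h6 : 2 ^ (q - 1) < 4 ^ (q - 1) := Nat.pow_lt_pow_left (by norm_num) (by omega)
  omega

lemma aux_key (j : ℕ) : 
    |(Nat.fib (2 * j + 2) : ℝ) / Nat.fib (2 * j + 3) * Nat.fib (j + 1) - Nat.fib j|
      ≤ 1 / Nat.fib (j + 1) := by
  have e1 : (Nat.fib (2 * j + 3) : ℝ) = Nat.fib (j + 2) ^ 2 + Nat.fib (j + 1) ^ 2 := by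
    have := Nat.fib_two_mul_add_one (j + 1)
    rw [show 2 * (j + 1) + 1 = 2 * j + 3 by ring] at this
    exact_mod_cast this
  have e2 : (Nat.fib (2 * j + 3) : ℝ) = Nat.fib (2 * j + 1) + Nat.fib (2 * j + 2) := by
    exact_mod_cast Nat.fib_add_two
  have e3 : (Nat.fib (2 * j + 1) : ℝ) = Nat.fib (j + 1) ^ 2 + Nat.fib j ^ 2 := by
    exact_mod_cast Nat.fib_two_mul_add_one j
  have e4 : (Nat.fib (j + 2) : ℝ) = Nat.fib j + Nat.fib (j + 1) := by
    exact_mod_cast Nat.fib_add_two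
  have e5 := congrArg (Int.cast : ℤ → ℝ) (aux_fib_det j 1)
  push_cast at e5
  simp only [Nat.fib_one, Nat.cast_one, mul_one] at e5
  rw [show j + 1 + 1 = j + 2 by ring] at e5
  have hx : (0 : ℝ) < Nat.fib (j + 1) := by exact_mod_cast Nat.fib_pos.mpr (by omega)
  have hz : (0 : ℝ) ≤ Nat.fib j := by positivity
  have hN : (0 : ℝ) < Nat.fib (2 * j + 3) := by rw [e1]; positivity
  have e6 : (Nat.fib (2 * j + 2) : ℝ) = Nat.fib (j + 2) ^ 2 - Nat.fib j ^ 2 := by linarith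
  have e7 : (Nat.fib (2 * j + 2) : ℝ) / Nat.fib (2 * j + 3) * Nat.fib (j + 1) - Nat.fib j
      = (-1) ^ j * (Nat.fib (j + 2) / Nat.fib (2 * j + 3)) := by
    rw [← e5]
    field_simp
    rw [e6, e1, e4]
    ring
  rw [e7, abs_mul, abs_pow, abs_neg, abs_one, one_pow, one_mul, abs_of_nonneg (by positivity)]
  rw [div_le_div_iff₀ hN hx, e1, e4]
  nlinarith

lemma aux_grow : Filter.Tendsto (fun j : ℕ => (2 * j + 6 : ℝ) / Nat.fib (j + 1))
    Filter.atTop (nhds 0) := by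
  have hlow : ∀ j : ℕ, (j : ℝ) ^ 2 ≤ 16 * Nat.fib (j + 1) := by
    intro j
    have : ∀ j : ℕ, j ^ 2 ≤ 16 * Nat.fib (j + 1) ∧ (j + 1) ^ 2 ≤ 16 * Nat.fib (j + 2) := by
      intro j
      induction j with
      | zero => simp
      | succ j ih =>
        refine ⟨ih.2, ?_⟩
        rw [show j + 1 + 2 = j + 1 + 2 from rfl, Nat.fib_add_two (n := j + 1)]
        by_cases hj : j < 4
        · interval_cases j <;> simp [Nat.fib]
        · rw [show j + 1 + 1 = j + 2 by ring]
          nlinarith [ih.1, ih.2]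
    exact_mod_cast (this j).1
  have h2 : Filter.Tendsto (fun j : ℕ => (128 : ℝ) / j) Filter.atTop (nhds 0) :=
    tendsto_const_div_atTop_nhds_zero_nat 128
  refine tendsto_of_tendsto_of_tendsto_of_le_of_le' tendsto_const_nhds h2 ?_ ?_
  · exact Filter.Eventually.of_forall fun j => by positivity
  · filter_upwards [Filter.eventually_ge_atTop 1] with j hj
    have hj' : (1 : ℝ) ≤ j := by exact_mod_cast hj
    have hx : (0 : ℝ) < Nat.fib (j + 1) := by exact_mod_cast Nat.fib_pos.mpr (by omega)
    rw [div_le_div_iff₀ hx (by linarith)]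
    nlinarith [hlow j]

lemma aux_dense (x y ε : ℝ) (hx0 : 0 < x) (hx1 : x < 1) (hy0 : 0 < y) (hy1 : y < 1) (hε : 0 < ε)
    (K : ℕ) : ∃ n a : ℕ, K < n ∧ 1 ≤ a ∧ a < Nat.fib n ∧ Nat.gcd a (Nat.fib n) = 1 ∧
      |(a : ℝ) / Nat.fib n - x| < ε ∧
      |Int.fract ((Nat.fib (n - 1) : ℝ) * a / Nat.fib n) - y| < ε ∧
      0 < Int.fract ((Nat.fib (n - 1) : ℝ) * a / Nat.fib n) := by
  obtain ⟨ε', hε', l0, l1, l2, l3, l4⟩ : ∃ ε' : ℝ, 0 < ε' ∧ ε' ≤ ε ∧ ε' ≤ x ∧ ε' ≤ 1 - x ∧ ε' ≤ y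
      ∧ ε' ≤ 1 - y := by
    refine ⟨min ε (min (min x (1 - x)) (min y (1 - y))), ?_, ?_, ?_, ?_, ?_, ?_⟩
    · simp only [lt_min_iff]; refine ⟨hε, ⟨hx0, ?_⟩, hy0, ?_⟩ <;> linarith
    all_goals simp
  have hev := (aux_grow.eventually (gt_mem_nhds hε'))
  obtain ⟨J, hJ⟩ := Filter.eventually_atTop.mp hev
  obtain ⟨q, hqge, hq⟩ := Nat.exists_infinite_primes (2 * J + K + 7)
  obtain ⟨j, rfl⟩ : ∃ j, q = 2 * j + 3 := by
    rcases hq.eq_two_or_odd' with h | ⟨m, hm⟩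
    · omega
    · exact ⟨m - 1, by omega⟩
  have hsmall := hJ j (by omega)
  have hkey := aux_key j
  have hMpos : 0 < Nat.fib (j + 1) := Nat.fib_pos.mpr (by omega)
  have hNpos : 0 < Nat.fib (2 * j + 3) := Nat.fib_pos.mpr (by omega)
  have hNM : Nat.fib (j + 1) ^ 2 ≤ Nat.fib (2 * j + 3) := by
    have := Nat.fib_two_mul_add_one (j + 1)
    rw [show 2 * (j + 1) + 1 = 2 * j + 3 by ring] at this
    rw [this]; omega
  have hcop : Nat.Coprime (Nat.fib (j + 1)) (Nat.fib (2 * j + 3)) := by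
    have : Nat.Coprime (2 * j + 3) (j + 1) := by
      rw [Nat.Prime.coprime_iff_not_dvd hq]
      intro hd
      have := Nat.le_of_dvd (by omega) hd
      omega
    rw [Nat.Coprime, ← Nat.fib_gcd, this.symm, Nat.fib_one]
  have hcop2 : Nat.Coprime (Nat.fib j) (Nat.fib (j + 1)) := Nat.fib_coprime_fib_succ j
  have hsub : 2 * j + 3 - 1 = 2 * j + 2 := by omega
  generalize hM : Nat.fib (j + 1) = M at *
  generalize hN : Nat.fib (2 * j + 3) = N at *
  generalize hP : Nat.fib j = P at *
  have hMr : (0 : ℝ) < M := by exact_mod_cast hMpos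
  have hNr : (0 : ℝ) < N := by exact_mod_cast hNpos
  have hNMr : (M : ℝ) ^ 2 ≤ N := by exact_mod_cast hNM
  set c : ℝ := (Nat.fib (2 * j + 2) : ℝ) / N with hc
  set a0 : ℕ := ⌊x * N⌋₊ with ha0
  have ha0le : (a0 : ℝ) ≤ x * N := Nat.floor_le (by positivity)
  have ha0lt : x * N < a0 + 1 := Nat.lt_floor_add_one _
  set r : ℤ := ⌊(M : ℝ) * (y - c * a0)⌋ with hr
  have hr1 : (r : ℝ) ≤ M * (y - c * a0) := Int.floor_le _
  have hr2 : (M : ℝ) * (y - c * a0) < r + 1 := Int.lt_floor_add_one _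
  obtain ⟨s, z, hsM, hsz⟩ : ∃ (s : ℕ) (z : ℤ), s < M ∧ (s : ℤ) * P = r + M * z := by
    have hb : (P : ℤ) * Nat.gcdA P M + M * Nat.gcdB P M = 1 := by
      have := Nat.gcd_eq_gcd_ab P M
      rw [hcop2] at this
      push_cast at this
      linarith
    have hMz : (0 : ℤ) < M := by exact_mod_cast hMpos
    have h0 := Int.emod_nonneg (r * Nat.gcdA P M) hMz.ne'
    have h1 := Int.emod_lt_of_pos (r * Nat.gcdA P M) hMz
    have h2 := Int.emod_add_mul_ediv (r * Nat.gcdA P M) M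
    refine ⟨((r * Nat.gcdA P M) % M).toNat,
      -(r * Nat.gcdB P M) - P * ((r * Nat.gcdA P M) / M), by omega, ?_⟩
    rw [Int.toNat_of_nonneg h0]
    linear_combination (P : ℤ) * h2 + r * hb
  obtain ⟨t, ht, htc⟩ := aux_sieve (2 * j + 3) (a0 + s) M hq (by omega) (by rw [hN]; exact hcop)
  rw [hN] at htc
  have htr : (t : ℝ) ≤ 2 * j + 1 := by
    have : t ≤ 2 * j + 1 := by omega
    exact_mod_cast this
  have hsr : (s : ℝ) ≤ M := by exact_mod_cast hsM.le
  have hsr0 : (0 : ℝ) ≤ s := by positivity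
  have htr0 : (0 : ℝ) ≤ t := by positivity
  have hM1 : (1 : ℝ) ≤ M := by exact_mod_cast hMpos
  have hszr : (s : ℝ) * P = r + M * z := by exact_mod_cast hsz
  obtain ⟨a, ha⟩ : ∃ a, a = a0 + s + t * M := ⟨_, rfl⟩
  have har : (a : ℝ) = a0 + s + t * M := by rw [ha]; push_cast; ring
  rw [← ha] at htc
  rw [div_lt_iff₀ hMr] at hsmall
  -- first coordinate
  have hA : |(a : ℝ) / N - x| < ε' := by
    have : (a : ℝ) / N - x = (a - x * N) / N := by field_simp
    rw [this, abs_div, abs_of_pos hNr, div_lt_iff₀ hNr]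
    have h1 : (2 * j + 6 : ℝ) * M < ε' * N := by
      calc (2 * j + 6 : ℝ) * M < ε' * M * M := by gcongr
        _ = ε' * M ^ 2 := by ring
        _ ≤ ε' * N := by gcongr
    have h2 : (t : ℝ) * M ≤ (2 * j + 1) * M := by gcongr
    have h3 : 0 ≤ (t : ℝ) * M := by positivity
    have h4 : 0 ≤ (j : ℝ) * M := by positivity
    rw [abs_lt, har]
    constructor <;> nlinarith
  -- second coordinate
  have hB : |c * a - ((z : ℝ) + t * P) - y| < ε' := by
    have hη := abs_le.mp hkey
    obtain ⟨η, hηd⟩ : ∃ η, η = c * M - P := ⟨_, rfl⟩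
    rw [← hηd] at hη
    have hηM : |η * M| ≤ 1 := by
      rw [abs_mul, abs_of_pos hMr]
      have : |η| ≤ 1 / M := abs_le.mpr hη
      rwa [le_div_iff₀ hMr] at this
    have hηM' := abs_le.mp hηM
    have e : (c * a - ((z : ℝ) + t * P) - y) * M
        = (r - M * (y - c * a0)) + (s * η) + t * (η * M) := by
      rw [har, hηd]
      linear_combination hszr
    have hsη : |s * η| ≤ 1 := by
      rw [abs_mul, abs_of_nonneg hsr0]
      calc s * |η| ≤ M * |η| := by gcongr
        _ = |η * M| := by rw [abs_mul, abs_of_pos hMr]; ring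
        _ ≤ 1 := hηM
    have htη : |t * (η * M)| ≤ t := by
      rw [abs_mul, abs_of_nonneg htr0]
      exact mul_le_of_le_one_right htr0 hηM
    have h1 := abs_le.mp hsη
    have h2 := abs_le.mp htη
    have h3 : |(c * a - ((z : ℝ) + t * P) - y) * M| < ε' * M := by
      rw [e, abs_lt]
      constructor <;> linarith [(Nat.cast_nonneg j : (0 : ℝ) ≤ j)]
    rw [abs_mul, abs_of_pos hMr] at h3
    exact lt_of_mul_lt_mul_right h3 hMr.le
  have hA' := abs_lt.mp hA
  have hB' := abs_lt.mp hB
  have hfr : Int.fract (((Nat.fib (2 * j + 3 - 1) : ℕ) : ℝ) * a / N)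
      = c * a - ((z : ℝ) + t * P) := by
    rw [Int.fract_eq_iff]
    refine ⟨by linarith, by linarith, z + t * P, ?_⟩
    rw [hsub, hc]
    push_cast
    ring
  have hapos : (0 : ℝ) < a / N := by linarith
  have halt : (a : ℝ) / N < 1 := by linarith
  refine ⟨2 * j + 3, a, by omega, ?_, ?_, ?_, ?_, ?_, ?_⟩
  · rcases Nat.eq_zero_or_pos a with h | h
    · rw [h] at hapos; simp at hapos
    · exact h
  · rw [hN]
    rw [div_lt_one hNr] at halt
    exact_mod_cast halt
  · rw [hN]; exact htc
  · rw [hN]; linarith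
  · rw [hN, hfr]; linarith
  · rw [hN, hfr]; linarith

/-- Given any sequence of positive reals `δ_ν → 0`, there exist `α, β ∈ [0,1]`, a strictly
increasing sequence of positive integers `n_ν` and integers `a_ν` with `1 ≤ a_ν < F_{n_ν}`,
`gcd(a_ν, F_{n_ν}) = 1`, such that `|α − a_ν/F_{n_ν}| ≤ δ_ν/F_{n_ν}²` and
`|β − {F_{n_ν−1} a_ν / F_{n_ν}}| ≤ δ_ν/F_{n_ν}²` for all `ν`. -/
theorem stmt_8 (δ : ℕ → ℝ) (hδpos : ∀ ν, 0 < δ ν)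
    (hδ : Filter.Tendsto δ Filter.atTop (nhds 0)) :
    ∃ α β : ℝ, α ∈ Set.Icc (0 : ℝ) 1 ∧ β ∈ Set.Icc (0 : ℝ) 1 ∧
      ∃ n : ℕ → ℕ, StrictMono n ∧ (∀ ν, 0 < n ν) ∧
        ∃ a : ℕ → ℕ, ∀ ν : ℕ,
          1 ≤ a ν ∧ a ν < Nat.fib (n ν) ∧ Nat.gcd (a ν) (Nat.fib (n ν)) = 1 ∧
          |α - (a ν : ℝ) / (Nat.fib (n ν) : ℝ)| ≤ δ ν / (Nat.fib (n ν) : ℝ) ^ 2 ∧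
          |β - Int.fract ((Nat.fib (n ν - 1) : ℝ) * (a ν : ℝ) / (Nat.fib (n ν) : ℝ))| ≤
            δ ν / (Nat.fib (n ν) : ℝ) ^ 2 := by
  classical
  let X : ℕ × ℕ → ℝ := fun s => (s.2 : ℝ) / Nat.fib s.1
  let Y : ℕ × ℕ → ℝ := fun s => Int.fract ((Nat.fib (s.1 - 1) : ℝ) * s.2 / Nat.fib s.1)
  let G : ℕ × ℕ → Prop := fun s => 0 < s.1 ∧ 1 ≤ s.2 ∧ s.2 < Nat.fib s.1 ∧
    Nat.gcd s.2 (Nat.fib s.1) = 1 ∧ 0 < Y s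
  let S := {s : (ℕ × ℕ) × ℝ // G s.1 ∧ 0 < s.2}
  have step : ∀ (ν : ℕ) (s : S), ∃ s' : S, s.1.1.1 < s'.1.1.1 ∧
      s'.1.2 ≤ δ (ν + 1) / (Nat.fib s'.1.1.1 : ℝ) ^ 2 ∧
      |X s'.1.1 - X s.1.1| + s'.1.2 ≤ s.1.2 ∧ |Y s'.1.1 - Y s.1.1| + s'.1.2 ≤ s.1.2 := by
    rintro ν ⟨⟨⟨n, a⟩, ρ⟩, ⟨hn, ha1, haN, hg, hY⟩, hρ⟩
    simp only at hn ha1 haN hg hY hρ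
    have hN : (0 : ℝ) < Nat.fib n := by exact_mod_cast (by omega : 0 < Nat.fib n)
    obtain ⟨n', a', h1, h2, h3, h4, h5, h6, h7⟩ := aux_dense (X (n, a)) (Y (n, a)) (ρ / 2)
      (div_pos (by exact_mod_cast ha1) hN) ((div_lt_one hN).mpr (by exact_mod_cast haN))
      hY (Int.fract_lt_one _) (by linarith) n
    have hN' : (0 : ℝ) < Nat.fib n' := by exact_mod_cast (by omega : 0 < Nat.fib n')
    have hd : 0 < δ (ν + 1) / (Nat.fib n' : ℝ) ^ 2 := div_pos (hδpos _) (by positivity)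
    refine ⟨⟨((n', a'), min (ρ / 2) (δ (ν + 1) / (Nat.fib n' : ℝ) ^ 2)),
      ⟨by show 0 < n'; omega, h2, h3, h4, h7⟩, lt_min (by linarith) hd⟩, h1, min_le_right _ _, ?_, ?_⟩
    · have := min_le_left (ρ / 2) (δ (ν + 1) / (Nat.fib n' : ℝ) ^ 2)
      show |X (n', a') - X (n, a)| + min (ρ / 2) (δ (ν + 1) / (Nat.fib n' : ℝ) ^ 2) ≤ ρ
      have h5' : |X (n', a') - X (n, a)| < ρ / 2 := h5
      linarith
    · have := min_le_left (ρ / 2) (δ (ν + 1) / (Nat.fib n' : ℝ) ^ 2)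
      show |Y (n', a') - Y (n, a)| + min (ρ / 2) (δ (ν + 1) / (Nat.fib n' : ℝ) ^ 2) ≤ ρ
      have h6' : |Y (n', a') - Y (n, a)| < ρ / 2 := h6
      linarith
  have init : ∃ s : S, s.1.2 ≤ δ 0 / (Nat.fib s.1.1.1 : ℝ) ^ 2 ∧
      |X s.1.1 - 1 / 2| + s.1.2 ≤ 1 / 2 ∧ |Y s.1.1 - 1 / 2| + s.1.2 ≤ 1 / 2 := by
    obtain ⟨n', a', h1, h2, h3, h4, h5, h6, h7⟩ := aux_dense (1 / 2) (1 / 2) (1 / 4)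
      (by norm_num) (by norm_num) (by norm_num) (by norm_num) (by norm_num) 0
    have hN' : (0 : ℝ) < Nat.fib n' := by exact_mod_cast (by omega : 0 < Nat.fib n')
    have hd : 0 < δ 0 / (Nat.fib n' : ℝ) ^ 2 := div_pos (hδpos _) (by positivity)
    have := min_le_left (1 / 4) (δ 0 / (Nat.fib n' : ℝ) ^ 2)
    refine ⟨⟨((n', a'), min (1 / 4) (δ 0 / (Nat.fib n' : ℝ) ^ 2)),
      ⟨h1, h2, h3, h4, h7⟩, lt_min (by norm_num) hd⟩, min_le_right _ _, ?_, ?_⟩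
    · show |X (n', a') - 1 / 2| + min (1 / 4) (δ 0 / (Nat.fib n' : ℝ) ^ 2) ≤ 1 / 2
      have h5' : |X (n', a') - 1 / 2| < 1 / 4 := h5
      linarith
    · show |Y (n', a') - 1 / 2| + min (1 / 4) (δ 0 / (Nat.fib n' : ℝ) ^ 2) ≤ 1 / 2
      have h6' : |Y (n', a') - 1 / 2| < 1 / 4 := h6
      linarith
  choose nxt hn1 hn2 hn3 hn4 using step
  obtain ⟨s0, hs0, hs1, hs2⟩ := init
  let u : ℕ → S := fun k => Nat.rec s0 (fun ν s => nxt ν s) k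
  have hu : ∀ k, u (k + 1) = nxt k (u k) := fun k => rfl
  have hρ : ∀ k, (u k).1.2 ≤ δ k / (Nat.fib (u k).1.1.1 : ℝ) ^ 2 := by
    intro k
    cases k with
    | zero => exact hs0
    | succ k => rw [hu]; exact hn2 _ _
  have nest : ∀ Z : ℕ × ℕ → ℝ,
      (∀ k, |Z (u (k + 1)).1.1 - Z (u k).1.1| + (u (k + 1)).1.2 ≤ (u k).1.2) →
      |Z (u 0).1.1 - 1 / 2| + (u 0).1.2 ≤ 1 / 2 →
      ∃ α ∈ Set.Icc (0 : ℝ) 1, ∀ k, |α - Z (u k).1.1| ≤ (u k).1.2 := by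
    intro Z h h0
    have hanti : Antitone fun k =>
        Set.Icc (Z (u k).1.1 - (u k).1.2) (Z (u k).1.1 + (u k).1.2) := by
      refine antitone_nat_of_succ_le fun k => ?_
      apply Set.Icc_subset_Icc
      · have := neg_abs_le (Z (u (k + 1)).1.1 - Z (u k).1.1)
        linarith [h k]
      · have := le_abs_self (Z (u (k + 1)).1.1 - Z (u k).1.1)
        linarith [h k]
    have hmem := ciSup_mem_iInter_Icc_of_antitone_Icc hanti
      (fun k => by linarith [(u k).2.2])
    rw [Set.mem_iInter] at hmem
    generalize (⨆ n, (Z (u n).1.1 - (u n).1.2)) = w at hmem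
    refine ⟨w, ?_, fun k => ?_⟩
    rotate_left
    · exact abs_le.mpr ⟨by linarith [(hmem k).1], by linarith [(hmem k).2]⟩
    · have h1 := neg_abs_le (Z (u 0).1.1 - 1 / 2)
      have h2 := le_abs_self (Z (u 0).1.1 - 1 / 2)
      exact ⟨by linarith [(hmem 0).1], by linarith [(hmem 0).2]⟩
  obtain ⟨α, hα, hα'⟩ := nest X (fun k => by rw [hu]; exact hn3 _ _) hs1
  obtain ⟨β, hβ, hβ'⟩ := nest Y (fun k => by rw [hu]; exact hn4 _ _) hs2
  refine ⟨α, β, hα, hβ, fun k => (u k).1.1.1, ?_, fun k => (u k).2.1.1, fun k => (u k).1.1.2, ?_⟩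
  · refine strictMono_nat_of_lt_succ fun k => ?_
    rw [hu]; exact hn1 _ _
  · intro k
    exact ⟨(u k).2.1.2.1, (u k).2.1.2.2.1, (u k).2.1.2.2.2.1,
      (hα' k).trans (hρ k), (hβ' k).trans (hρ k)⟩
end

section
/- Let α, β be real numbers for which there exist a sequence of positive reals δ_ν → 0, a strictly increasing sequence of positive integers (n_ν), and integers (a_ν) with 1 ≤ a_ν < F_{n_ν}, gcd(a_ν, F_{n_ν}) = 1, such that |α − a_ν/F_{n_ν}| ≤ δ_ν/F_{n_ν}² and |β − {F_{n_ν−1}·a_ν/F_{n_ν}}| ≤ δ_ν/F_{n_ν}² for all ν. Then for every ε > 0 there exists V such that for all ν ≥ V, min_{x ∈ ℤ, 1 ≤ x < F_{n_ν}} ‖αx‖ · ‖βx‖ ≥ 1/( F_{n_ν} · ((3+√5)/2 + ε) ). -/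
lemma fib_prod_bound (k j : ℕ) : Nat.fib (k+j+1) ≤ Nat.fib (k+2) * Nat.fib (j+1) := by
  rw [Nat.fib_add, Nat.fib_add_two, add_mul]
  have := Nat.fib_mono (Nat.le_succ j)
  have := Nat.mul_le_mul_left (Nat.fib k) this
  exact Nat.add_le_add_right this _

lemma key1 (N : ℕ) : ∀ j k : ℕ, k + j + 1 = N + 2 → ∀ s t : ℤ, 1 ≤ s → 1 ≤ t →
    s * Nat.fib (j+1) - t * Nat.fib j ≠ 0 →
    (Nat.fib N : ℤ) ≤ (s * Nat.fib k + t * Nat.fib (k+1)) *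
      |s * Nat.fib (j+1) - t * Nat.fib j| := by
  intro j
  induction j with
  | zero =>
    intro k hk s t hs ht hw
    obtain rfl : k = N + 1 := by omega
    have h1 : (Nat.fib N : ℤ) ≤ Nat.fib (N+1) := by exact_mod_cast Nat.fib_le_fib_succ
    have h0 : (0:ℤ) ≤ Nat.fib N := by positivity
    have h2 : (0:ℤ) ≤ Nat.fib (N+1+1) := by positivity
    simp only [zero_add, Nat.fib_one, Nat.fib_zero, Nat.cast_one, Nat.cast_zero, mul_one,
      mul_zero, sub_zero]
    rw [abs_of_pos (by omega)]
    nlinarith [mul_nonneg (by omega : (0:ℤ) ≤ t) h2, mul_le_mul hs h1 h0 (by omega),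
      mul_nonneg (add_nonneg (mul_nonneg (by omega : (0:ℤ) ≤ s) (h0.trans h1)) (mul_nonneg (by omega : (0:ℤ) ≤ t) h2)) (by omega : (0:ℤ) ≤ s-1)]
  | succ j ih =>
    intro k hk s t hs ht hw
    have e1 : s * (Nat.fib (j+1+1) : ℤ) - t * Nat.fib (j+1)
        = -((t - s) * Nat.fib (j+1) - s * Nat.fib j) := by
      rw [Nat.fib_add_two]; push_cast; ring
    have e2 : s * (Nat.fib k : ℤ) + t * Nat.fib (k+1)
        = (t - s) * Nat.fib (k+1) + s * Nat.fib (k+1+1) := by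
      rw [Nat.fib_add_two (n := k)]; push_cast; ring
    by_cases hts : s < t
    · rw [e1] at hw ⊢
      rw [e2, abs_neg]
      exact ih (k+1) (by omega) (t - s) s (by omega) hs (neg_ne_zero.1 hw)
    · push Not at hts
      have hk0 : (0:ℤ) ≤ Nat.fib k := by positivity
      have hk1 : (0:ℤ) ≤ Nat.fib (k+1) := by positivity
      have hj0 : (0:ℤ) ≤ Nat.fib j := by positivity
      have hj1 : (0:ℤ) ≤ Nat.fib (j+1) := by positivity
      have hu : (Nat.fib (k+2) : ℤ) ≤ s * (Nat.fib k : ℤ) + t * Nat.fib (k+1) := by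
        rw [Nat.fib_add_two]; push_cast
        nlinarith
      have hw' : (Nat.fib j : ℤ) ≤ |s * (Nat.fib (j+1+1) : ℤ) - t * Nat.fib (j+1)| := by
        refine le_trans ?_ (le_abs_self _)
        rw [e1]
        nlinarith [mul_nonneg (by omega : 0 ≤ s - t) hj1]
      rcases j with _ | j
      · have : (1:ℤ) ≤ |s * (Nat.fib (0+1+1) : ℤ) - t * Nat.fib (0+1)| := Int.one_le_abs hw
        obtain rfl : k = N := by omega
        have h3 : (Nat.fib k : ℤ) ≤ Nat.fib (k+2) := by exact_mod_cast Nat.fib_mono (by omega)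
        nlinarith
      · have h3 := fib_prod_bound k j
        obtain rfl : N = k + j + 1 := by omega
        have h4 : (Nat.fib (k+j+1) : ℤ) ≤ Nat.fib (k+2) * Nat.fib (j+1) := by exact_mod_cast h3
        exact h4.trans (mul_le_mul hu hw' hj0 (le_trans (by positivity) hu))

lemma key2 (N : ℕ) (s t : ℤ) (ht : 1 ≤ t)
    (hw : s * Nat.fib (N+2) - t * Nat.fib (N+1) ≠ 0) :
    (Nat.fib N : ℤ) ≤ t * |s * Nat.fib (N+2) - t * Nat.fib (N+1)| := by
  by_cases hs : 1 ≤ s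
  · have := key1 N (N+1) 0 (by omega) s t hs ht hw
    simpa using this
  · have h1 : (Nat.fib N : ℤ) ≤ Nat.fib (N+1) := by exact_mod_cast Nat.fib_le_fib_succ
    have h0 : (0:ℤ) ≤ Nat.fib N := by positivity
    have h2 : (0:ℤ) ≤ Nat.fib (N+2) := by positivity
    have : (Nat.fib N : ℤ) ≤ |s * Nat.fib (N+2) - t * Nat.fib (N+1)| := by
      refine le_trans ?_ (neg_le_abs _)
      nlinarith [mul_nonneg (by omega : 0 ≤ -s) h2]
    nlinarith

lemma key3 (N : ℕ) (s t : ℤ) (ht : t ≠ 0)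
    (hw : t * Nat.fib (N+1) - s * Nat.fib (N+2) ≠ 0) :
    (Nat.fib N : ℤ) ≤ |t| * |t * Nat.fib (N+1) - s * Nat.fib (N+2)| := by
  rcases lt_or_gt_of_ne ht with h | h
  · have := key2 N (-s) (-t) (by omega) (by intro h; apply hw; linarith)
    rw [abs_of_neg h]
    convert this using 3
    ring
  · have := key2 N s t (by omega) (by intro h; apply hw; linarith)
    rw [abs_of_pos h, abs_sub_comm]
    exact this

lemma real_step (θ c q d x p : ℝ) (hq : 0 < q) (hx : 0 ≤ x) (hxq : x ≤ q) (hd : 0 ≤ d)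
    (h : |θ - c / q| ≤ d / q ^ 2) (hU : 1 ≤ |c * x - p * q|) :
    (1 - d) * |c * x - p * q| / q ≤ |θ * x - p| := by
  have h1 : |(θ - c / q) * x| ≤ d / q := by
    rw [abs_mul, abs_of_nonneg hx]
    calc _ ≤ d / q ^ 2 * q := by gcongr
      _ = d / q := by field_simp
  have h2 : |c * x - p * q| / q = |(θ * x - p) - (θ - c / q) * x| := by
    rw [← abs_of_pos hq, ← abs_div, abs_of_pos hq]
    congr 1; field_simp; ring
  have h3 := abs_sub (θ * x - p) ((θ - c / q) * x)
  have h4 : d / q ≤ d * |c * x - p * q| / q := by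
    gcongr; nlinarith
  have : (1 - d) * |c * x - p * q| / q = |c * x - p * q| / q - d * |c * x - p * q| / q := by ring
  linarith

lemma main_bound (N a : ℕ) (α β d : ℝ) (hd : 0 ≤ d) (hd1 : d ≤ 1)
    (hcop : Nat.gcd a (Nat.fib (N+2)) = 1)
    (h1 : |α - (a : ℝ) / (Nat.fib (N+2) : ℝ)| ≤ d / (Nat.fib (N+2) : ℝ) ^ 2)
    (h2 : |β - Int.fract ((Nat.fib (N+1) : ℝ) * (a : ℝ) / (Nat.fib (N+2) : ℝ))| ≤
        d / (Nat.fib (N+2) : ℝ) ^ 2) (x : ℤ) (hx : 1 ≤ x) (hxq : x < (Nat.fib (N+2) : ℤ)) :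
    (1 - d)^2 * Nat.fib N / (Nat.fib (N+2) : ℝ)^2 ≤
      distNearestInt (α * (x : ℝ)) * distNearestInt (β * (x : ℝ)) := by
  unfold distNearestInt
  set p := round (α * x)
  set r := round (β * x)
  set q := Nat.fib (N+2) with hqdef
  set g := Nat.fib (N+1) with hg
  set f := ⌊(g : ℝ) * (a : ℝ) / (q : ℝ)⌋ with hf
  have hqpos : 0 < q := Nat.fib_pos.2 (by omega)
  have hq : (0:ℝ) < q := by exact_mod_cast hqpos
  have hca : IsCoprime (q : ℤ) (a : ℤ) := by
    rw [Nat.isCoprime_iff_coprime]; exact (Nat.Coprime.symm hcop)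
  have hcg : IsCoprime (q : ℤ) (g : ℤ) := by
    rw [Nat.isCoprime_iff_coprime]; exact (Nat.fib_coprime_fib_succ (N+1)).symm
  have hnd : ¬ (q : ℤ) ∣ x := fun h => by
    have := Int.le_of_dvd (by omega) h
    omega
  have hu : (a:ℤ) * x - p * q ≠ 0 := fun h =>
    hnd (hca.dvd_of_dvd_mul_left ⟨p, by linarith⟩)
  have hw : ((g:ℤ) * a - f * q) * x - r * q ≠ 0 := fun h =>
    hnd (hca.dvd_of_dvd_mul_left (hcg.dvd_of_dvd_mul_left ⟨r + f * x, by linarith⟩))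
  have hww : ((g:ℤ) * a - f * q) * x - r * q = ((a:ℤ) * x - p * q) * g - (r + f * x - p * g) * q := by
    ring
  have hk : (Nat.fib N : ℤ) ≤ |(a:ℤ) * x - p * q| * |((g:ℤ) * a - f * q) * x - r * q| := by
    rw [hww] at hw ⊢
    exact key3 N _ _ hu hw
  have hkR : (Nat.fib N : ℝ) ≤ |(a:ℝ) * x - p * q| * |((g:ℝ) * a - f * q) * x - r * q| := by
    exact_mod_cast hk
  have hu1 : (1:ℝ) ≤ |(a:ℝ) * x - p * q| := by exact_mod_cast Int.one_le_abs hu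
  have hw1 : (1:ℝ) ≤ |((g:ℝ) * a - f * q) * x - r * q| := by exact_mod_cast Int.one_le_abs hw
  have hx0 : (0:ℝ) ≤ x := by exact_mod_cast (by omega : 0 ≤ x)
  have hxq' : (x:ℝ) ≤ q := by exact_mod_cast hxq.le
  have hfr : Int.fract ((g : ℝ) * (a : ℝ) / (q : ℝ)) = ((g:ℝ) * a - f * q) / q := by
    rw [Int.fract, ← hf]; field_simp
  rw [hfr] at h2
  have A := real_step α a q d x p hq hx0 hxq' hd h1 hu1
  have B := real_step β _ q d x r hq hx0 hxq' hd h2 hw1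
  have hd' : 0 ≤ 1 - d := by linarith
  calc (1 - d)^2 * Nat.fib N / (q : ℝ)^2
      ≤ (1 - d)^2 * (|(a:ℝ) * x - p * q| * |((g:ℝ) * a - f * q) * x - r * q|) / (q : ℝ)^2 := by
        gcongr
    _ = ((1 - d) * |(a:ℝ) * x - p * q| / q) * ((1 - d) * |((g:ℝ) * a - f * q) * x - r * q| / q) := by
        field_simp
    _ ≤ _ := mul_le_mul A B (by positivity) (abs_nonneg _)

lemma fib_ratio : Filter.Tendsto (fun N : ℕ => (Nat.fib N : ℝ) / Nat.fib (N+2)) Filter.atTop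
    (nhds (1 / ((3 + Real.sqrt 5) / 2))) := by
  have h := tendsto_fib_succ_div_fib_atTop
  have h' := (Filter.tendsto_add_atTop_iff_nat 1).2 h
  have h2 := ((h.mul h').inv₀ (by positivity))
  have e : (Real.goldenRatio * Real.goldenRatio)⁻¹ = 1 / ((3 + Real.sqrt 5) / 2) := by
    rw [← pow_two, Real.goldenRatio_sq, Real.goldenRatio, one_div]; congr 1; ring
  rw [e] at h2
  refine h2.congr' ?_
  filter_upwards [Filter.eventually_ge_atTop 1] with N hN
  have : (0:ℝ) < Nat.fib N := by exact_mod_cast Nat.fib_pos.2 hN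
  have : (0:ℝ) < Nat.fib (N+1) := by exact_mod_cast Nat.fib_pos.2 (by omega)
  have : (0:ℝ) < Nat.fib (N+2) := by exact_mod_cast Nat.fib_pos.2 (by omega)
  simp only [add_assoc, Nat.reduceAdd]
  field_simp


/-- If `α, β` admit the special approximations by `a_ν/F_{n_ν}` and
`{F_{n_ν−1} a_ν / F_{n_ν}}` with errors `δ_ν/F_{n_ν}²`, `δ_ν → 0`, then for every `ε > 0`
and all large `ν`, `min_{1 ≤ x < F_{n_ν}} ‖αx‖·‖βx‖ ≥ 1/(F_{n_ν} ((3+√5)/2 + ε))`. -/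
theorem stmt_9 (α β : ℝ) (δ : ℕ → ℝ) (hδpos : ∀ ν, 0 < δ ν)
    (hδ : Filter.Tendsto δ Filter.atTop (nhds 0))
    (n : ℕ → ℕ) (hn : StrictMono n) (hnpos : ∀ ν, 0 < n ν)
    (a : ℕ → ℕ) (ha : ∀ ν, 1 ≤ a ν ∧ a ν < Nat.fib (n ν))
    (hcop : ∀ ν, Nat.gcd (a ν) (Nat.fib (n ν)) = 1)
    (happrox : ∀ ν,
      |α - (a ν : ℝ) / (Nat.fib (n ν) : ℝ)| ≤ δ ν / (Nat.fib (n ν) : ℝ) ^ 2 ∧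
      |β - Int.fract ((Nat.fib (n ν - 1) : ℝ) * (a ν : ℝ) / (Nat.fib (n ν) : ℝ))| ≤
        δ ν / (Nat.fib (n ν) : ℝ) ^ 2) :
    ∀ ε : ℝ, 0 < ε → ∃ V : ℕ, ∀ ν : ℕ, V ≤ ν →
      ∀ x : ℤ, 1 ≤ x → x < (Nat.fib (n ν) : ℤ) →
        distNearestInt (α * (x : ℝ)) * distNearestInt (β * (x : ℝ)) ≥
          1 / ((Nat.fib (n ν) : ℝ) * ((3 + Real.sqrt 5) / 2 + ε)) := by
  intro ε hε
  have hnt := hn.tendsto_atTop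
  have hT : Filter.Tendsto (fun ν => (1 - δ ν)^2 * ((Nat.fib (n ν - 2) : ℝ) / Nat.fib (n ν - 2 + 2)))
      Filter.atTop (nhds ((1 - 0)^2 * (1 / ((3 + Real.sqrt 5) / 2)))) :=
    ((hδ.const_sub 1).pow 2).mul (fib_ratio.comp ((Filter.tendsto_sub_atTop_nat 2).comp hnt))
  have hlt : 1 / ((3 + Real.sqrt 5) / 2 + ε) < (1 - 0)^2 * (1 / ((3 + Real.sqrt 5) / 2)) := by
    rw [sub_zero, one_pow, one_mul]
    exact one_div_lt_one_div_of_lt (by positivity) (by linarith)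
  have hev := ((hT.eventually (lt_mem_nhds hlt)).and
    (hδ.eventually (gt_mem_nhds one_pos))).and (hnt.eventually_ge_atTop 2)
  obtain ⟨V, hV⟩ := Filter.eventually_atTop.1 hev
  refine ⟨V, fun ν hν x hx hxq => ?_⟩
  obtain ⟨⟨hv1, hv2⟩, hv3⟩ := hV ν hν
  obtain ⟨N, hN⟩ : ∃ N, n ν = N + 2 := ⟨n ν - 2, by omega⟩
  have hc := hcop ν
  obtain ⟨h1, h2⟩ := happrox ν
  rw [hN] at hxq hc h1 h2 hv1 ⊢
  have hm := main_bound N (a ν) α β (δ ν) (hδpos ν).le hv2.le hc h1 h2 x hx hxq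
  refine le_trans ?_ hm
  rw [show N + 2 - 2 = N by omega] at hv1
  have hq : (0:ℝ) < Nat.fib (N+2) := by exact_mod_cast Nat.fib_pos.2 (by omega)
  calc 1 / ((Nat.fib (N+2) : ℝ) * ((3 + Real.sqrt 5) / 2 + ε))
      = (1 / ((3 + Real.sqrt 5) / 2 + ε)) / Nat.fib (N+2) := by field_simp
    _ ≤ ((1 - δ ν)^2 * ((Nat.fib N : ℝ) / Nat.fib (N + 2))) / Nat.fib (N+2) := by gcongr
    _ = _ := by field_simp
end

section
/- Let α, β be real numbers for which there exist a sequence of positive reals δ_ν → 0, a strictly increasing sequence of positive integers (n_ν), and integers (a_ν) with 1 ≤ a_ν < F_{n_ν}, gcd(a_ν, F_{n_ν}) = 1, such that |α − a_ν/F_{n_ν}| ≤ δ_ν/F_{n_ν}² and |β − {F_{n_ν−1}·a_ν/F_{n_ν}}| ≤ δ_ν/F_{n_ν}² for all ν. Then limsup_{Q→∞} Q · ( min_{x ∈ ℤ, 1 ≤ x < Q} ‖αx‖ · ‖βx‖ ) ≥ 2/(3+√5). -/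
lemma aux_basis (k : ℕ) : ∀ (j : ℕ) (y t : ℤ), ∃ c d : ℤ,
    y = c * Nat.fib k + d * Nat.fib (k+1) ∧
    |t * Nat.fib (k+1+j) - y * Nat.fib (k+j)| = |c * Nat.fib (j+1) - d * Nat.fib j| := by
  induction k with
  | zero =>
    intro j y t
    refine ⟨t, y, by simp, ?_⟩
    rw [show 0+1+j = j+1 by ring, show 0 + j = j by ring]
  | succ k ih =>
    intro j y t
    obtain ⟨c, d, h1, h2⟩ := ih (j+1) y t
    refine ⟨d - c, c, ?_, ?_⟩
    · rw [h1, show k+1+1 = k+2 by ring, Nat.fib_add_two]; push_cast; ring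
    · rw [show k+1+1+j = k+1+(j+1) by ring, show k+1+j = k+(j+1) by ring, h2,
        show j+1+1 = j+2 by ring, Nat.fib_add_two, ← abs_neg]
      congr 1; push_cast; ring

lemma aux_z (k j : ℕ) (y t : ℤ) (hy : 0 < y) (hy2 : y < Nat.fib (k+1)) :
    (Nat.fib (j+1) : ℤ) ≤ |t * Nat.fib (k+1+j) - y * Nat.fib (k+j)| := by
  obtain ⟨c, d, h1, h2⟩ := aux_basis k j y t
  rw [h2]
  have f1 : (0:ℤ) ≤ Nat.fib k := by positivity
  have f2 : (0:ℤ) ≤ Nat.fib (k+1) := by positivity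
  have f3 : (0:ℤ) ≤ Nat.fib (j+1) := by positivity
  have f4 : (0:ℤ) ≤ Nat.fib j := by positivity
  rcases lt_trichotomy c 0 with hc | hc | hc
  · rcases lt_or_ge d 0 with hd | hd
    · nlinarith
    · rw [abs_sub_comm]
      refine le_trans ?_ (le_abs_self _)
      nlinarith
  · subst hc
    rcases lt_or_ge 0 d with hd | hd
    · nlinarith
    · nlinarith
  · rcases lt_or_ge 0 d with hd | hd
    · nlinarith
    · refine le_trans ?_ (le_abs_self _)
      nlinarith

lemma aux_prod_s10 (p q : ℕ) : Nat.fib (p+q+1) ≤ Nat.fib (p+2) * Nat.fib (q+1) := by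
  rw [Nat.fib_add, Nat.fib_add_two, add_mul]
  have h : Nat.fib q ≤ Nat.fib (q+1) := Nat.fib_mono (by omega)
  nlinarith [Nat.mul_le_mul_left (Nat.fib p) h]

lemma aux_pos_s10 (s : ℕ) (y t : ℤ) (hy : 0 < y) (hy2 : y < Nat.fib (s+3)) :
    (Nat.fib (s+1) : ℤ) ≤ y * |t * Nat.fib (s+3) - y * Nat.fib (s+2)| := by
  have hex : ∃ k, y < Nat.fib (k+3) := ⟨s, hy2⟩
  classical
  let k := Nat.find hex
  have hk : y < Nat.fib (k+3) := Nat.find_spec hex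
  have hks : k ≤ s := Nat.find_le hy2
  have hlow : (Nat.fib (k+2) : ℤ) ≤ y := by
    rcases Nat.eq_zero_or_pos k with h0 | h0
    · rw [h0]; simp; omega
    · have := Nat.find_min hex (m := k-1) (by omega)
      rw [show k - 1 + 3 = k+2 by omega] at this
      omega
  clear_value k
  obtain ⟨j, rfl⟩ := Nat.exists_eq_add_of_le hks
  have h := aux_z (k+2) j y t hy hk
  rw [show k+2+1+j = k+j+3 by ring, show k+2+j = k+j+2 by ring] at h
  have h2 : (Nat.fib (k+j+1) : ℤ) ≤ Nat.fib (k+2) * Nat.fib (j+1) := by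
    exact_mod_cast aux_prod_s10 k j
  exact h2.trans (mul_le_mul hlow h (by positivity) (by positivity))

lemma aux_all_s10 (s : ℕ) (u t : ℤ) (hu : ¬ (Nat.fib (s+3) : ℤ) ∣ u) :
    u ≠ 0 ∧ (Nat.fib (s+2) : ℤ) * u - t * Nat.fib (s+3) ≠ 0 ∧
    (Nat.fib (s+1) : ℤ) ≤ |u| * |(Nat.fib (s+2) : ℤ) * u - t * Nat.fib (s+3)| := by
  have hu0 : u ≠ 0 := by rintro rfl; simp at hu
  have hv0 : (Nat.fib (s+2) : ℤ) * u - t * Nat.fib (s+3) ≠ 0 := by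
    intro h
    apply hu
    have hc : IsCoprime (Nat.fib (s+3) : ℤ) (Nat.fib (s+2) : ℤ) :=
      Nat.isCoprime_iff_coprime.mpr (Nat.fib_coprime_fib_succ (s+2)).symm
    exact hc.dvd_of_dvd_mul_left ⟨t, by linarith⟩
  refine ⟨hu0, hv0, ?_⟩
  rcases lt_or_ge |u| (Nat.fib (s+3) : ℤ) with h | h
  · rcases lt_or_gt_of_ne hu0 with hn | hp
    · rw [abs_of_neg hn] at h ⊢
      have := aux_pos_s10 s (-u) (-t) (by omega) h
      refine this.trans (le_of_eq ?_)
      congr 2; ring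
    · rw [abs_of_pos hp] at h ⊢
      have := aux_pos_s10 s u t hp h
      rw [abs_sub_comm] at this
      refine this.trans (le_of_eq ?_)
      congr 2; ring
  · have h1 : 1 ≤ |(Nat.fib (s+2) : ℤ) * u - t * Nat.fib (s+3)| := Int.one_le_abs hv0
    have h2 : (Nat.fib (s+1) : ℤ) ≤ Nat.fib (s+3) := by
      exact_mod_cast Nat.fib_mono (by omega)
    nlinarith [abs_nonneg u]

lemma aux_dist (θ δ N b x : ℝ) (u m : ℤ) (hN : 0 < N) (hx0 : 0 ≤ x) (hx : x ≤ N) (hδ : 0 < δ)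
    (h : |θ - b / N| ≤ δ / N^2) (hu : (u:ℝ) = b * x - m * N) (hu0 : u ≠ 0) :
    (1 - δ) * |(u:ℝ)| / N ≤ |θ * x - m| := by
  have h1 : (1:ℝ) ≤ |(u:ℝ)| := by exact_mod_cast Int.one_le_abs hu0
  have e : (u:ℝ) / N = (θ * x - m) - (θ - b/N) * x := by
    rw [hu]; field_simp; ring
  have h2 : |(u:ℝ)| / N ≤ |θ * x - m| + |θ - b/N| * x := by
    rw [← abs_of_pos hN, ← abs_div, abs_of_pos hN, e]
    refine (abs_sub _ _).trans ?_
    rw [abs_mul, abs_of_nonneg hx0]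
  have h3 : |θ - b/N| * x ≤ δ / N := by
    calc _ ≤ δ / N^2 * N := by gcongr
      _ = _ := by field_simp
  have h4 : δ / N ≤ δ * |(u:ℝ)| / N := by
    gcongr; nlinarith
  have h5 : (1 - δ) * |(u:ℝ)| / N = |(u:ℝ)| / N - δ * |(u:ℝ)| / N := by ring
  linarith

lemma aux_main (α β δ : ℝ) (s a : ℕ) (hδ0 : 0 < δ) (hδ1 : δ < 1)
    (hcop : Nat.gcd a (Nat.fib (s+3)) = 1)
    (h1 : |α - (a : ℝ) / (Nat.fib (s+3) : ℝ)| ≤ δ / (Nat.fib (s+3) : ℝ) ^ 2)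
    (h2 : |β - Int.fract ((Nat.fib (s+2) : ℝ) * (a : ℝ) / (Nat.fib (s+3) : ℝ))| ≤
        δ / (Nat.fib (s+3) : ℝ) ^ 2) (x : ℕ) (hx1 : 1 ≤ x) (hx : x < Nat.fib (s+3)) :
    (1-δ)^2 * (Nat.fib (s+1) / (Nat.fib (s+3))^2) ≤
      distNearestInt (α * x) * distNearestInt (β * x) := by
  unfold distNearestInt
  set m := round (α * x)
  set m' := round (β * x)
  set N : ℕ := Nat.fib (s+3) with hN
  have hNpos : 0 < N := by omega
  have hNR : (0:ℝ) < N := by exact_mod_cast hNpos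
  set f : ℤ := ⌊(Nat.fib (s+2) : ℝ) * (a : ℝ) / (N : ℝ)⌋ with hf
  have hdvd : ¬ (N : ℤ) ∣ (a * x - m * N : ℤ) := by
    intro h
    have h' : (N:ℤ) ∣ (a * x : ℤ) := by
      have := dvd_add h (Dvd.intro_left m rfl)
      simpa using this
    have h'' : N ∣ a * x := by exact_mod_cast h'
    have := (Nat.Coprime.symm hcop).dvd_of_dvd_mul_left h''
    exact absurd (Nat.le_of_dvd (by omega) this) (by omega)
  obtain ⟨hu0, hv0, hp⟩ := aux_all_s10 s (a * x - m * N) (f * x + m' - m * Nat.fib (s+2)) hdvd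
  rw [← hN] at hv0 hp
  set u : ℤ := a * x - m * N with hu
  set v : ℤ := (Nat.fib (s+2) : ℤ) * u - (f * x + m' - m * Nat.fib (s+2)) * N with hv
  have hxN : (x:ℝ) ≤ N := by exact_mod_cast hx.le
  have d1 := aux_dist α δ N a x u m hNR (by positivity) hxN hδ0 h1 (by rw [hu]; push_cast; ring) hu0
  have d2 := aux_dist β δ N (Nat.fib (s+2) * a - f * N) x v m' hNR (by positivity) hxN hδ0
    (by
      have : Int.fract ((Nat.fib (s+2) : ℝ) * (a : ℝ) / (N : ℝ))
          = (Nat.fib (s+2) * a - f * N) / N := by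
        rw [Int.fract, ← hf]; field_simp
      rw [← this]; exact h2)
    (by rw [hv, hu]; push_cast; ring) hv0
  have hpR : (Nat.fib (s+1) : ℝ) ≤ |(u:ℝ)| * |(v:ℝ)| := by exact_mod_cast hp
  have hd : 0 ≤ 1 - δ := by linarith
  calc (1-δ)^2 * ((Nat.fib (s+1) : ℝ) / (N:ℝ)^2)
      ≤ (1-δ)^2 * ((|(u:ℝ)| * |(v:ℝ)|) / (N:ℝ)^2) := by gcongr
    _ = ((1 - δ) * |(u:ℝ)| / N) * ((1 - δ) * |(v:ℝ)| / N) := by field_simp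
    _ ≤ _ := mul_le_mul d1 d2 (by positivity) (by positivity)

lemma aux_bdd (α β : ℝ) (Q : ℕ) :
    (Q : ℝ) * sInf {y : ℝ | ∃ x : ℕ, 1 ≤ x ∧ x < Q ∧
              y = distNearestInt (α * x) * distNearestInt (β * x)} ≤ 1 := by
  rcases Nat.lt_or_ge Q 2 with h | h
  · have : {y : ℝ | ∃ x : ℕ, 1 ≤ x ∧ x < Q ∧
              y = distNearestInt (α * x) * distNearestInt (β * x)} = ∅ := by
      ext y; simp; intro x h1 h2; omega
    rw [this]; simp
  · obtain ⟨k, hk0, hk, hkk⟩ := Real.exists_nat_abs_mul_sub_round_le α (n := Q - 1) (by omega)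
    have hQ : ((Q - 1 : ℕ) : ℝ) + 1 = Q := by
      rw [Nat.cast_sub (by omega)]; simp
    rw [hQ, mul_comm] at hkk
    have hQ0 : (0:ℝ) < Q := by exact_mod_cast (by omega : 0 < Q)
    have hle : sInf {y : ℝ | ∃ x : ℕ, 1 ≤ x ∧ x < Q ∧
              y = distNearestInt (α * x) * distNearestInt (β * x)} ≤
              distNearestInt (α * k) * distNearestInt (β * k) := by
      apply csInf_le
      · refine ⟨0, ?_⟩
        rintro y ⟨x, _, _, rfl⟩
        unfold distNearestInt; positivity
      · exact ⟨k, hk0, by omega, rfl⟩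
    have h2 : distNearestInt (β * k) ≤ 1 :=
      (abs_sub_round (β * k)).trans (by norm_num)
    have h3 : distNearestInt (α * k) ≤ 1 / Q := hkk
    have h4 : 0 ≤ distNearestInt (β * k) := abs_nonneg _
    calc _ ≤ (Q:ℝ) * (1 / Q * 1) := by
          refine mul_le_mul_of_nonneg_left (hle.trans ?_) hQ0.le
          exact mul_le_mul h3 h2 h4 (by positivity)
      _ = 1 := by field_simp

lemma aux_lim_s10 : Filter.Tendsto (fun k : ℕ => (Nat.fib (k - 2) : ℝ) / Nat.fib k)
    Filter.atTop (nhds (2 / (3 + Real.sqrt 5))) := by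
  rw [← Filter.tendsto_add_atTop_iff_nat 2]
  have h := (tendsto_fib_div_fib_succ_atTop.comp (Filter.tendsto_add_atTop_nat 1)).const_sub 1
  have e : 1 - -Real.goldenConj = 2 / (3 + Real.sqrt 5) := by
    have h5 : Real.sqrt 5 ^ 2 = 5 := Real.sq_sqrt (by norm_num)
    have : 0 ≤ Real.sqrt 5 := Real.sqrt_nonneg _
    rw [Real.goldenConj, eq_div_iff (by positivity)]
    nlinarith
  rw [e] at h
  refine h.congr fun k => ?_
  have : (Nat.fib (k+2) : ℝ) ≠ 0 := by
    have := Nat.fib_pos.mpr (show 0 < k+2 by omega)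
    positivity
  simp only [Function.comp, Nat.add_sub_cancel]
  rw [show k+1+1 = k+2 by ring, eq_div_iff this, sub_mul, div_mul_cancel₀ _ this, Nat.fib_add_two]
  push_cast; ring

/-- If `α, β` admit the special approximations by `a_ν/F_{n_ν}` and
`{F_{n_ν−1} a_ν / F_{n_ν}}` with errors `δ_ν/F_{n_ν}²`, `δ_ν → 0`, then
`limsup_{Q→∞} Q · (min_{1 ≤ x < Q} ‖αx‖·‖βx‖) ≥ 2/(3+√5)`. -/
theorem stmt_10 (α β : ℝ) (δ : ℕ → ℝ) (hδpos : ∀ ν, 0 < δ ν)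
    (hδ : Filter.Tendsto δ Filter.atTop (nhds 0))
    (n : ℕ → ℕ) (hn : StrictMono n) (hnpos : ∀ ν, 0 < n ν)
    (a : ℕ → ℕ) (ha : ∀ ν, 1 ≤ a ν ∧ a ν < Nat.fib (n ν))
    (hcop : ∀ ν, Nat.gcd (a ν) (Nat.fib (n ν)) = 1)
    (happrox : ∀ ν,
      |α - (a ν : ℝ) / (Nat.fib (n ν) : ℝ)| ≤ δ ν / (Nat.fib (n ν) : ℝ) ^ 2 ∧
      |β - Int.fract ((Nat.fib (n ν - 1) : ℝ) * (a ν : ℝ) / (Nat.fib (n ν) : ℝ))| ≤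
        δ ν / (Nat.fib (n ν) : ℝ) ^ 2) :
    2 / (3 + Real.sqrt 5) ≤
      Filter.limsup
        (fun Q : ℕ =>
          (Q : ℝ) *
            sInf {y : ℝ | ∃ x : ℕ, 1 ≤ x ∧ x < Q ∧
              y = distNearestInt (α * x) * distNearestInt (β * x)})
        Filter.atTop := by
  have hntop : Filter.Tendsto n Filter.atTop Filter.atTop := hn.tendsto_atTop
  have hlim : Filter.Tendsto (fun ν => (1 - δ ν)^2 * ((Nat.fib (n ν - 2) : ℝ) / Nat.fib (n ν)))
      Filter.atTop (nhds (2 / (3 + Real.sqrt 5))) := by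
    have := ((hδ.const_sub 1).pow 2).mul (aux_lim_s10.comp hntop)
    simpa using this
  have hfib : Filter.Tendsto (fun ν => Nat.fib (n ν)) Filter.atTop Filter.atTop := by
    refine Filter.Tendsto.comp (g := Nat.fib) ?_ hntop
    refine Filter.tendsto_atTop_mono' _ ?_ Filter.tendsto_id
    filter_upwards [Filter.eventually_ge_atTop 5] with k hk using Nat.le_fib_self hk
  refine le_of_forall_lt fun c hc => ?_
  obtain ⟨c', hcc', hc'⟩ := exists_between hc
  refine hcc'.trans_le ?_
  refine Filter.le_limsup_of_frequently_le ?_ ?_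
  · refine hfib.frequently (Filter.Eventually.frequently ?_)
    filter_upwards [hlim.eventually_const_lt hc', hδ.eventually_lt_const one_pos] with ν h1 h2
    refine h1.le.trans ?_
    have hN2 : 2 ≤ Nat.fib (n ν) := by have := ha ν; omega
    have hn3 : 3 ≤ n ν := by
      by_contra hlt
      have := Nat.fib_mono (show n ν ≤ 2 by omega)
      simp at this; omega
    obtain ⟨s, hs⟩ := Nat.exists_eq_add_of_le' hn3
    have hap := happrox ν
    have hco := hcop ν
    rw [hs] at hap hco hN2 ⊢
    have hN0 : (0:ℝ) < Nat.fib (s+3) := by exact_mod_cast (by omega : 0 < Nat.fib (s+3))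
    have key : (1-δ ν)^2 * ((Nat.fib (s+1) : ℝ) / (Nat.fib (s+3) : ℝ)^2) ≤
        sInf {y : ℝ | ∃ x : ℕ, 1 ≤ x ∧ x < Nat.fib (s+3) ∧
              y = distNearestInt (α * x) * distNearestInt (β * x)} := by
      apply le_csInf
      · exact ⟨_, 1, le_refl _, by omega, rfl⟩
      · rintro y ⟨x, hx1, hx, rfl⟩
        exact aux_main α β (δ ν) s (a ν) (hδpos ν) h2 hco hap.1 hap.2 x hx1 hx
    have := mul_le_mul_of_nonneg_left key hN0.le
    refine le_trans (le_of_eq ?_) this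
    rw [show s + 3 - 2 = s + 1 by omega]
    field_simp
  · exact Filter.isBoundedUnder_of ⟨1, fun Q => aux_bdd α β Q⟩
end

section
/- For every σ > 0 there exists N such that for every integer n ≥ N there exists a positive integer k with |k − n/2| ≤ n^σ and gcd(k, n) = 1; consequently gcd(F_k, F_n) = F_{gcd(k,n)} = 1. -/
theorem aux_k (n : ℕ) (hn : 10 ≤ n) :
    ∃ k : ℕ, 0 < k ∧ 2 * k ≤ n ∧ n ≤ 2 * k + 4 ∧ Nat.Coprime k n := by
  have h : n % 4 = 0 ∨ n % 4 = 2 ∨ n % 2 = 1 := by omega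
  rcases h with h | h | h
  · obtain ⟨j, hj⟩ : ∃ j, n = 2 * (2 * j + 1) + 2 := ⟨n / 4 - 1, by omega⟩
    refine ⟨2 * j + 1, by omega, by omega, by omega, ?_⟩
    rw [hj, Nat.coprime_mul_right_add_right]
    simp
  · obtain ⟨j, hj⟩ : ∃ j, n = 2 * (2 * j + 1) + 2 ^ 2 := ⟨(n - 6) / 4, by omega⟩
    refine ⟨2 * j + 1, by omega, by omega, by omega, ?_⟩
    rw [hj, Nat.coprime_mul_right_add_right]
    apply Nat.Coprime.pow_right
    simp
  · obtain ⟨k, hk⟩ : ∃ k, n = 2 * k + 1 := ⟨n / 2, by omega⟩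
    refine ⟨k, by omega, by omega, by omega, ?_⟩
    rw [hk, Nat.coprime_mul_right_add_right]
    simp

/-- For every σ > 0 and all large `n` there is a positive integer `k` with
`|k − n/2| ≤ n^σ`, `gcd(k, n) = 1`; consequently `gcd(F_k, F_n) = F_{gcd(k,n)} = 1`. -/
theorem stmt_13 (σ : ℝ) (hσ : 0 < σ) :
    ∃ N : ℕ, ∀ n : ℕ, N ≤ n →
      ∃ k : ℕ, 0 < k ∧ |(k : ℝ) - (n : ℝ) / 2| ≤ (n : ℝ) ^ σ ∧ Nat.gcd k n = 1 ∧
        Nat.gcd (Nat.fib k) (Nat.fib n) = Nat.fib (Nat.gcd k n) ∧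
        Nat.fib (Nat.gcd k n) = 1 := by
  have ht : Filter.Tendsto (fun n : ℕ => (n : ℝ) ^ σ) Filter.atTop Filter.atTop :=
    (tendsto_rpow_atTop hσ).comp tendsto_natCast_atTop_atTop
  obtain ⟨N, hN⟩ := Filter.eventually_atTop.mp (ht.eventually_ge_atTop 2)
  refine ⟨max N 10, fun n hn => ?_⟩
  obtain ⟨k, h0, h1, h2, h3⟩ := aux_k n (le_trans (le_max_right _ _) hn)
  have hp := hN n (le_trans (le_max_left _ _) hn)
  have hg : Nat.gcd k n = 1 := h3
  refine ⟨k, h0, ?_, hg, (Nat.fib_gcd k n).symm, by rw [hg]; rfl⟩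
  have h1' : 2 * (k : ℝ) ≤ n := by exact_mod_cast h1
  have h2' : (n : ℝ) ≤ 2 * k + 4 := by exact_mod_cast h2
  rw [abs_le]
  constructor <;> linarith
end

section
/- For any real numbers u, v, η with η > 0 such that [u, u+η] ⊆ [0,1] and [v, v+η] ⊆ [0,1], for all sufficiently large n there exists an integer a₀ with u·F_n ≤ a₀ ≤ (u + η/2)·F_n such that the fractional part {F_{n−1}·a₀/F_n} lies in the open interval (v + η/3, v + 2η/3). -/
theorem fib_docagne_odd (m r : ℕ) :
    Nat.fib (r + 2 * m) * Nat.fib (2 * m + 1)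
      = Nat.fib (2 * m) * Nat.fib (r + 2 * m + 1) + Nat.fib r := by
  induction m with
  | zero => simp
  | succ m ih =>
    have e1 : r + 2 * (m + 1) = (r + 2 * m) + 2 := by ring
    have e2 : 2 * (m + 1) = 2 * m + 2 := by ring
    have e3 : r + 2 * m + 2 + 1 = (r + 2 * m + 1) + 2 := by ring
    have e4 : 2 * m + 2 + 1 = (2 * m + 1) + 2 := by ring
    rw [e1, e2, e3, e4]
    simp only [Nat.fib_add_two (n := r + 2 * m + 1), Nat.fib_add_two (n := 2 * m + 1),
      Nat.fib_add_two (n := r + 2 * m), Nat.fib_add_two (n := 2 * m),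
      show r + 2 * m + 1 + 1 = r + 2 * m + 2 from rfl, show 2 * m + 1 + 1 = 2 * m + 2 from rfl]
    nlinarith [ih]

set_option maxHeartbeats 1000000 in
/-- For intervals `[u,u+η], [v,v+η] ⊆ [0,1]` and all `n` large enough, there is an integer
`a₀` with `u F_n ≤ a₀ ≤ (u+η/2) F_n` such that `{F_{n-1} a₀ / F_n} ∈ (v+η/3, v+2η/3)`. -/
theorem stmt_15 (u v η : ℝ) (hη : 0 < η)
    (hI : Set.Icc u (u + η) ⊆ Set.Icc (0 : ℝ) 1)
    (hJ : Set.Icc v (v + η) ⊆ Set.Icc (0 : ℝ) 1) :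
    ∃ N : ℕ, ∀ n : ℕ, N ≤ n →
      ∃ a₀ : ℤ, u * (Nat.fib n : ℝ) ≤ (a₀ : ℝ) ∧
        (a₀ : ℝ) ≤ (u + η / 2) * (Nat.fib n : ℝ) ∧
        Int.fract ((Nat.fib (n - 1) : ℝ) * (a₀ : ℝ) / (Nat.fib n : ℝ)) ∈
          Set.Ioo (v + η / 3) (v + 2 * η / 3) := by
  have hv0 : 0 ≤ v := (hJ ⟨le_refl v, by linarith⟩).1
  have hv1 : v + η ≤ 1 := (hJ ⟨by linarith, le_refl (v + η)⟩).2
  obtain ⟨m, hm⟩ := exists_nat_gt (3 / η)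
  have hm' : 3 < m * η := by rwa [div_lt_iff₀ hη] at hm
  have hmpos : (0 : ℝ) < m := lt_trans (by positivity) hm
  set C : ℝ := (Nat.fib (2 * m) : ℝ) + 2 * Nat.fib (2 * m + 1) with hC
  obtain ⟨M, hM⟩ := exists_nat_gt ((1 + (C + 1) * Nat.fib (2 * m + 1)) / (η / 2))
  refine ⟨M + 2 * m + 2, fun n hn => ?_⟩
  obtain ⟨r, rfl⟩ : ∃ r, n = r + 2 * m + 1 := ⟨n - (2 * m + 1), by omega⟩
  have hr : 1 ≤ r := by omega
  have hsub : r + 2 * m + 1 - 1 = r + 2 * m := by omega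
  rw [hsub]
  have hdo : (Nat.fib (r + 2 * m) : ℝ) * Nat.fib (2 * m + 1)
      = Nat.fib (2 * m) * Nat.fib (r + 2 * m + 1) + Nat.fib r := by
    exact_mod_cast fib_docagne_odd m r
  have hadd : (Nat.fib (r + 2 * m + 1) : ℝ)
      = Nat.fib r * Nat.fib (2 * m) + Nat.fib (r + 1) * Nat.fib (2 * m + 1) := by
    exact_mod_cast Nat.fib_add r (2 * m)
  have hMle : (M : ℝ) ≤ Nat.fib (r + 2 * m + 1) := by
    have := Nat.le_fib_add_one (r + 2 * m + 1)
    have : M ≤ Nat.fib (r + 2 * m + 1) := by omega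
    exact_mod_cast this
  have hmle : (m : ℝ) ≤ Nat.fib (2 * m + 1) := by
    have := Nat.le_fib_add_one (2 * m + 1)
    have : m ≤ Nat.fib (2 * m + 1) := by omega
    exact_mod_cast this
  have hrpos : (0 : ℝ) < Nat.fib r := by exact_mod_cast Nat.fib_pos.2 hr
  have hr1 : (Nat.fib r : ℝ) ≤ Nat.fib (r + 1) := by exact_mod_cast Nat.fib_le_fib_succ
  have hr2 : (Nat.fib (r + 1) : ℝ) ≤ 2 * Nat.fib r := by
    obtain ⟨s, rfl⟩ : ∃ s, r = s + 1 := ⟨r - 1, by omega⟩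
    have h1 := Nat.fib_add_two (n := s)
    have h2 := Nat.fib_le_fib_succ (n := s)
    have : Nat.fib (s + 1 + 1) ≤ 2 * Nat.fib (s + 1) := by
      show Nat.fib (s + 2) ≤ _
      omega
    exact_mod_cast this
  have hnpos : (0 : ℝ) < Nat.fib (r + 2 * m + 1) := by
    exact_mod_cast Nat.fib_pos.2 (by omega)
  have hG : (0 : ℝ) ≤ Nat.fib (2 * m) := by positivity
  have hkpos : (0 : ℝ) < Nat.fib (2 * m + 1) := by
    exact_mod_cast Nat.fib_pos.2 (by omega)
  generalize (Nat.fib (r + 2 * m + 1) : ℝ) = F at *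
  generalize (Nat.fib (r + 2 * m) : ℝ) = E at *
  have hlow : (m : ℝ) * Nat.fib r ≤ F := by
    rw [hadd]; nlinarith [mul_le_mul hr1 hmle hmpos.le (by linarith), mul_nonneg hrpos.le hG]
  have hup : F ≤ C * Nat.fib r := by
    rw [hadd, hC]; nlinarith [mul_le_mul_of_nonneg_right hr2 hkpos.le]
  set δ : ℝ := Nat.fib r / F with hδ
  have hδ0 : 0 < δ := div_pos hrpos hnpos
  have hδF : δ * F = Nat.fib r := by rw [hδ]; field_simp
  have hδ1 : δ < η / 3 := by
    rw [hδ, div_lt_iff₀ hnpos]; nlinarith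
  have hδC : 1 / δ ≤ C := by
    rw [div_le_iff₀ hδ0, hδ, ← mul_div_assoc, le_div_iff₀ hnpos]; linarith
  set a : ℤ := ⌈u * F⌉ with ha
  have ha1 : u * F ≤ a := Int.le_ceil _
  have ha2 : (a : ℝ) < u * F + 1 := Int.ceil_lt_add_one _
  set x : ℝ := E * a / F with hx
  set p : ℝ := v + η / 3 with hp
  set z : ℤ := ⌈x - p⌉ with hz
  have hz1 : x - p ≤ z := Int.le_ceil _
  have hz2 : (z : ℝ) < x - p + 1 := Int.ceil_lt_add_one _
  set j : ℤ := ⌊(p + z - x) / δ⌋ + 1 with hj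
  have hj1 : (p + z - x) / δ < j := by rw [hj]; push_cast; exact Int.lt_floor_add_one _
  have hj2 : (j : ℝ) ≤ (p + z - x) / δ + 1 := by
    rw [hj]; push_cast; linarith [Int.floor_le ((p + z - x) / δ)]
  have hj0 : (0 : ℝ) ≤ j := le_trans (div_nonneg (by linarith) hδ0.le) hj1.le
  have hjC : (j : ℝ) ≤ C + 1 := by
    have : (p + z - x) / δ ≤ 1 / δ := by gcongr; linarith
    linarith
  have hj1' : p + z - x < j * δ := by rwa [div_lt_iff₀ hδ0] at hj1
  have hj2' : j * δ ≤ p + z - x + δ := by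
    have := mul_le_mul_of_nonneg_right hj2 hδ0.le
    rwa [add_mul, div_mul_cancel₀ _ hδ0.ne', one_mul] at this
  refine ⟨a + j * Nat.fib (2 * m + 1), ?_, ?_, ?_⟩
  · push_cast
    linarith [mul_nonneg hj0 hkpos.le]
  · push_cast
    rw [div_lt_iff₀ (by positivity)] at hM
    have h1 := mul_le_mul_of_nonneg_right hjC hkpos.le
    have h2 := mul_le_mul_of_nonneg_right hMle (half_pos hη).le
    have h3 : (u + η / 2) * F = u * F + F * (η / 2) := by ring
    rw [h3]
    linarith
  · have key : Int.fract (E * ((a + j * Nat.fib (2 * m + 1) : ℤ) : ℝ) / F) = x + j * δ - z := by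
      rw [Int.fract_eq_iff]
      refine ⟨by linarith, by linarith, z + j * Nat.fib (2 * m), ?_⟩
      have : E * ((a + j * Nat.fib (2 * m + 1) : ℤ) : ℝ) / F
          = x + j * δ + j * Nat.fib (2 * m) := by
        rw [hx, hδ]; push_cast; field_simp
        linear_combination (j : ℝ) * hdo
      rw [this]; push_cast; ring
    rw [key]
    constructor <;> linarith
end
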